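/- arXiv:1203.0253 — 5 statements merged into one kernel-verified Lean document; each statement's English description precedes it below -/
import Mathlib

section
/- Let f ∈ ℚ[X₁,…,Xₙ] and set d = ⌈deg(f)/2⌉. Then f is not a sum of squares of real polynomials if and only if there exists a rational sequence ŷ ∈ ℚ^m with m = C(n+2d, 2d), indexed by multi-indices of degree ≤ 2d, whose associated linear form L_ŷ satisfies L_ŷ(u²) ≥ 0 for every polynomial u ∈ ℝ[X₁,…,Xₙ] of total degree ≤ d, and L_ŷ(f) < 0. -/
open MvPolynomial

/-- `p` is a sum of squares of polynomials. -/
def IsSOS (n : ℕ) (p : MvPolynomial (Fin n) ℝ) : Prop :=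
  ∃ (l : ℕ) (u : Fin l → MvPolynomial (Fin n) ℝ), p = ∑ i, u i ^ 2

/-- The linear form `L_y(p) = Σ_α y_α p_α` associated to a sequence `y`. -/
noncomputable def LForm (n : ℕ) (y : (Fin n →₀ ℕ) → ℝ)
    (p : MvPolynomial (Fin n) ℝ) : ℝ :=
  ∑ α ∈ p.support, y α * p.coeff α

/-! ### Convex hulls of compact sets -/

/-- In finite dimension the convex hull of a compact set is compact. -/
theorem IsCompact.convexHull_of_finiteDimensional {E : Type*} [NormedAddCommGroup E]
    [NormedSpace ℝ E] [FiniteDimensional ℝ E] {s : Set E} (hs : IsCompact s) :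
    IsCompact (convexHull ℝ s) := by
  rcases s.eq_empty_or_nonempty with rfl | ⟨x₀, hx₀⟩
  · simp
  have himage : convexHull ℝ s =
      (fun p : (Fin (Module.finrank ℝ E + 1) → ℝ) × (Fin (Module.finrank ℝ E + 1) → E) =>
        ∑ i, p.1 i • p.2 i) '' (stdSimplex ℝ (Fin (Module.finrank ℝ E + 1)) ×ˢ
          Set.univ.pi fun _ => s) := by
    apply Set.Subset.antisymm
    · intro x hx
      obtain ⟨ι, _, z, w, hz, hind, hw, hw1, hx⟩ := eq_pos_convex_span_of_mem_convexHull hx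
      have hcard : Fintype.card ι ≤ Fintype.card (Fin (Module.finrank ℝ E + 1)) := by
        rw [Fintype.card_fin]
        exact hind.card_le_finrank_succ.trans
          (Nat.add_le_add_right (Submodule.finrank_le _) 1)
      obtain ⟨e⟩ := Function.Embedding.nonempty_of_card_le hcard
      have hw0 : ∀ j ∉ Set.range e, Function.extend e w 0 j = 0 := fun j hj =>
        Function.extend_apply' _ _ _ (by simpa using hj)
      refine ⟨(Function.extend e w 0, Function.extend e z fun _ => x₀), ⟨⟨fun j => ?_, ?_⟩, ?_⟩, ?_⟩
      · by_cases hj : j ∈ Set.range e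
        · obtain ⟨i, rfl⟩ := hj
          simpa [e.injective.extend_apply] using (hw i).le
        · exact (hw0 j hj).ge
      · rw [← hw1]
        exact (Fintype.sum_of_injective e e.injective _ _ hw0
          fun i => (e.injective.extend_apply _ _ _).symm).symm
      · intro j _
        by_cases hj : j ∈ Set.range e
        · obtain ⟨i, rfl⟩ := hj
          simpa [e.injective.extend_apply] using hz ⟨i, rfl⟩
        · simpa [Function.extend_apply' _ _ _ (by simpa using hj : ¬ ∃ i, e i = j)] using hx₀
      · rw [← hx]
        refine (Fintype.sum_of_injective e e.injective _ _ (fun j hj => ?_) fun i => ?_).symm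
        · simp [hw0 j hj]
        · simp [e.injective.extend_apply]
    · rintro _ ⟨⟨w, z⟩, ⟨hw, hz⟩, rfl⟩
      exact (convex_convexHull ℝ s).sum_mem (fun i _ => hw.1 i) hw.2
        fun i _ => subset_convexHull ℝ s (hz i trivial)
  rw [himage]
  refine ((isCompact_stdSimplex ℝ _).prod (isCompact_univ_pi fun _ => hs)).image ?_
  fun_prop

/-- A compact set whose convex hull avoids the origin lies in an open half space with
rational normal vector. -/
theorem exists_rat_forall_sum_pos {ι : Type*} [Fintype ι] {s : Set (ι → ℝ)} (hs : IsCompact s)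
    (h0 : (0 : ι → ℝ) ∉ convexHull ℝ s) :
    ∃ q : ι → ℚ, ∀ x ∈ s, 0 < ∑ i, (q i : ℝ) * x i := by
  classical
  obtain ⟨L, c, hc, hL⟩ := geometric_hahn_banach_point_closed (convex_convexHull ℝ s)
    hs.convexHull_of_finiteDimensional.isClosed h0
  rw [map_zero] at hc
  have hpos : ∀ x ∈ s, 0 < ∑ i, L (Pi.single i 1) * x i := by
    intro x hx
    have hsum : ∑ i, L (Pi.single i 1) * x i = L x := by
      conv_rhs => rw [pi_eq_sum_univ' x, map_sum]
      refine Finset.sum_congr rfl fun i _ => ?_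
      rw [map_smul, smul_eq_mul, mul_comm]
    rw [hsum]
    exact hc.trans (hL x (subset_convexHull ℝ s hx))
  have hev : ∀ᶠ y : ι → ℝ in nhds (fun i => L (Pi.single i 1)),
      ∀ x ∈ s, 0 < ∑ i, y i * x i := by
    refine hs.eventually_forall_of_forall_eventually fun x hx => ?_
    have hcont : Continuous fun p : (ι → ℝ) × (ι → ℝ) => ∑ i, p.1 i * p.2 i := by fun_prop
    exact hcont.continuousAt.eventually (lt_mem_nhds (hpos x hx))
  obtain ⟨U, hU, hUo, hmem⟩ := eventually_nhds_iff.1 hev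
  obtain ⟨q, hq⟩ := (DenseRange.piMap fun _ : ι => Rat.denseRange_cast (𝕜 := ℝ)).exists_mem_open
    hUo ⟨_, hmem⟩
  exact ⟨q, fun x hx => by simpa using hU _ hq x hx⟩

/-! ### Sums of squares -/

theorem IsSOS.add {n : ℕ} {p q : MvPolynomial (Fin n) ℝ} (hp : IsSOS n p) (hq : IsSOS n q) :
    IsSOS n (p + q) := by
  obtain ⟨k, u, rfl⟩ := hp
  obtain ⟨l, v, rfl⟩ := hq
  exact ⟨k + l, Fin.append u v, by simp [Fin.sum_univ_add]⟩

theorem IsSOS.smul {n : ℕ} {p : MvPolynomial (Fin n) ℝ} (hp : IsSOS n p) {a : ℝ} (ha : 0 ≤ a) :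
    IsSOS n (a • p) := by
  obtain ⟨k, u, rfl⟩ := hp
  refine ⟨k, fun i => √a • u i, ?_⟩
  simp [smul_pow, Real.sq_sqrt ha, Finset.smul_sum]

theorem isSOS_zero (n : ℕ) : IsSOS n 0 := ⟨0, Fin.elim0, by simp⟩

theorem isSOS_sq {n : ℕ} (u : MvPolynomial (Fin n) ℝ) : IsSOS n (u ^ 2) := ⟨1, fun _ => u, by simp⟩

theorem IsSOS.eval_nonneg {n : ℕ} {p : MvPolynomial (Fin n) ℝ} (hp : IsSOS n p) (x : Fin n → ℝ) :
    0 ≤ eval x p := by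
  obtain ⟨k, u, rfl⟩ := hp
  simpa using Finset.sum_nonneg fun i _ => sq_nonneg (eval x (u i))

/-- The squares of real polynomials cannot cancel in top degree. -/
theorem two_mul_totalDegree_le_totalDegree_sum_sq {n : ℕ} {ι : Type*} [Fintype ι]
    (u : ι → MvPolynomial (Fin n) ℝ) (j : ι) :
    2 * (u j).totalDegree ≤ (∑ i, u i ^ 2).totalDegree := by
  obtain ⟨k, -, hk⟩ := Finset.exists_max_image Finset.univ
    (fun i => MonomialOrder.degLex.toSyn (MonomialOrder.degLex.degree (u i)))
    ⟨j, Finset.mem_univ j⟩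
  set α := MonomialOrder.degLex.degree (u k) with hα
  have hjk : (u j).totalDegree ≤ (u k).totalDegree :=
    degLex_totalDegree_monotone (hk j (Finset.mem_univ j))
  by_cases huk : u k = 0
  · have : (u j).totalDegree = 0 := by simpa [huk] using hjk
    simp [this]
  have hcoeff : (∑ i, u i ^ 2).coeff (α + α) = ∑ i, (u i).coeff α ^ 2 := by
    rw [coeff_sum]
    refine Finset.sum_congr rfl fun i hi => ?_
    rw [sq, sq, MonomialOrder.coeff_mul_of_add_of_degree_le (hk i hi) (hk i hi)]
  have hne : (∑ i, u i ^ 2).coeff (α + α) ≠ 0 := by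
    rw [hcoeff]
    refine (lt_of_lt_of_le ?_ (Finset.single_le_sum (f := fun i => (u i).coeff α ^ 2)
      (fun i _ => sq_nonneg _) (Finset.mem_univ k))).ne'
    have : (u k).coeff α ≠ 0 := MonomialOrder.coeff_degree_ne_zero_iff.2 huk
    positivity
  have hle := le_totalDegree (mem_support_iff.2 hne)
  have hdeg : (α + α).degree = 2 * (u k).totalDegree := by
    rw [map_add, hα, degree_degLexDegree, two_mul]
  have : (α + α).degree ≤ (∑ i, u i ^ 2).totalDegree := hle
  omega

/-- If `p` is not a sum of squares, then `0` is not a convex combination of `-p` and nonzero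
squares. -/
theorem zero_notMem_convexHull_of_not_isSOS {n : ℕ} {p : MvPolynomial (Fin n) ℝ}
    (hp : ¬ IsSOS n p) :
    (0 : MvPolynomial (Fin n) ℝ) ∉ convexHull ℝ (insert (-p) ((· ^ 2) '' {u | u ≠ 0})) := by
  let T : Set (MvPolynomial (Fin n) ℝ) :=
    {q | ∃ (s : MvPolynomial (Fin n) ℝ) (t : ℝ), IsSOS n s ∧ 0 ≤ t ∧
      (0 < t ∨ ∃ x, 0 < eval x s) ∧ q = s - t • p}
  have hsub : insert (-p) ((· ^ 2) '' {u | u ≠ 0}) ⊆ T := by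
    rintro _ (rfl | ⟨u, hu, rfl⟩)
    · exact ⟨0, 1, isSOS_zero n, zero_le_one, Or.inl one_pos, by simp⟩
    · refine ⟨u ^ 2, 0, isSOS_sq u, le_rfl, Or.inr ?_, by simp⟩
      by_contra! h
      refine hu (MvPolynomial.funext fun x => ?_)
      have := h x
      rw [map_pow] at this
      simpa using pow_eq_zero_iff two_ne_zero |>.1 (le_antisymm this (sq_nonneg _))
  have hconv : Convex ℝ T := by
    rintro _ ⟨s, t, hs, ht, hst, rfl⟩ _ ⟨s', t', hs', ht', hst', rfl⟩ a b ha hb hab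
    refine ⟨a • s + b • s', a * t + b * t', (hs.smul ha).add (hs'.smul hb), by positivity, ?_, ?_⟩
    · rcases ha.eq_or_lt with rfl | ha
      · obtain rfl : b = 1 := by simpa using hab
        simpa using hst'
      · rcases hst with hst | ⟨x, hx⟩
        · left; positivity
        · right
          refine ⟨x, ?_⟩
          have := hs'.eval_nonneg x
          simp only [map_add, smul_eval]
          positivity
    · module
  intro h
  obtain ⟨s, t, hs, ht, hst, h⟩ := convexHull_min hsub hconv h
  have hs' : s = t • p := (sub_eq_zero.1 h.symm)
  rcases ht.eq_or_lt with rfl | ht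
  · simp [hs'] at hst
  · refine hp ?_
    have := hs.smul (inv_nonneg.2 ht.le)
    rwa [hs', smul_smul, inv_mul_cancel₀ ht.ne', one_smul] at this

/-! ### Coefficient vectors -/

/-- The exponents of total degree at most `d`. -/
noncomputable def expsLE (n d : ℕ) : Finset (Fin n →₀ ℕ) :=
  (Finsupp.finite_of_degree_le d).toFinset

theorem mem_expsLE {n d : ℕ} {α : Fin n →₀ ℕ} : α ∈ expsLE n d ↔ α.degree ≤ d := by
  simp [expsLE]

theorem support_subset_expsLE {n d : ℕ} {p : MvPolynomial (Fin n) ℝ} (hp : p.totalDegree ≤ d) :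
    p.support ⊆ expsLE n d := fun _ hα => mem_expsLE.2 ((le_totalDegree hα).trans hp)

theorem LForm_eq_sum_expsLE {n d : ℕ} (y : (Fin n →₀ ℕ) → ℝ) {p : MvPolynomial (Fin n) ℝ}
    (hp : p.totalDegree ≤ d) : LForm n y p = ∑ α ∈ expsLE n d, y α * p.coeff α :=
  Finset.sum_subset (support_subset_expsLE hp) fun α _ hα => by simp [notMem_support_iff.1 hα]

/-- The vector of coefficients of a polynomial in degrees at most `d`. -/
noncomputable def coeffVec (n d : ℕ) : MvPolynomial (Fin n) ℝ →ₗ[ℝ] (expsLE n d → ℝ) :=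
  LinearMap.pi fun α => lcoeff ℝ α.1

@[simp]
theorem coeffVec_apply {n d : ℕ} (p : MvPolynomial (Fin n) ℝ) (α : expsLE n d) :
    coeffVec n d p α = p.coeff α.1 := rfl

theorem eq_zero_of_coeffVec_eq_zero {n d : ℕ} {p : MvPolynomial (Fin n) ℝ}
    (hp : p.totalDegree ≤ d) (h : coeffVec n d p = 0) : p = 0 := by
  ext α
  by_cases hα : α ∈ p.support
  · simpa using congrFun h ⟨α, support_subset_expsLE hp hα⟩
  · simpa using hα

/-- The polynomial of degree at most `d` with a given vector of coefficients. -/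
noncomputable def polyOfVec (n d : ℕ) (c : expsLE n d → ℝ) : MvPolynomial (Fin n) ℝ :=
  ∑ α, monomial α.1 (c α)

theorem coeff_polyOfVec {n d : ℕ} (c : expsLE n d → ℝ) (β : Fin n →₀ ℕ) :
    (polyOfVec n d c).coeff β = if h : β ∈ expsLE n d then c ⟨β, h⟩ else 0 := by
  classical
  simp only [polyOfVec, coeff_sum, coeff_monomial]
  split_ifs with h
  · rw [Finset.sum_eq_single ⟨β, h⟩] <;> aesop
  · refine Finset.sum_eq_zero fun α _ => if_neg ?_
    rintro rfl
    exact h α.2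

theorem coeffVec_polyOfVec {n d : ℕ} (c : expsLE n d → ℝ) :
    coeffVec n d (polyOfVec n d c) = c := by
  ext α
  simp [coeff_polyOfVec]

theorem totalDegree_polyOfVec_le {n d : ℕ} (c : expsLE n d → ℝ) :
    (polyOfVec n d c).totalDegree ≤ d := by
  refine Finset.sup_le fun α hα => ?_
  rw [mem_support_iff, coeff_polyOfVec] at hα
  by_contra h
  exact hα (dif_neg fun hmem => h (mem_expsLE.1 hmem))

theorem polyOfVec_coeffVec {n d : ℕ} {p : MvPolynomial (Fin n) ℝ} (hp : p.totalDegree ≤ d) :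
    polyOfVec n d (coeffVec n d p) = p := by
  ext α
  rw [coeff_polyOfVec]
  split_ifs with h
  · rfl
  · exact (notMem_support_iff.1 fun hα => h (support_subset_expsLE hp hα)).symm

theorem polyOfVec_smul {n d : ℕ} (a : ℝ) (c : expsLE n d → ℝ) :
    polyOfVec n d (a • c) = a • polyOfVec n d c := by
  simp [polyOfVec, Finset.smul_sum, smul_monomial]

theorem continuous_coeffVec_polyOfVec_sq (n d e : ℕ) :
    Continuous fun c : expsLE n d → ℝ => coeffVec n e (polyOfVec n d c ^ 2) := by
  classical
  have hcoeff (β : Fin n →₀ ℕ) : Continuous fun c => (polyOfVec n d c).coeff β := by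
    simp only [coeff_polyOfVec]
    split_ifs <;> fun_prop
  refine continuous_pi fun α => ?_
  simp only [coeffVec_apply, sq, coeff_mul]
  exact continuous_finsetSum _ fun x _ => (hcoeff x.1).mul (hcoeff x.2)

theorem totalDegree_sq_le {n d : ℕ} {u : MvPolynomial (Fin n) ℝ} (hu : u.totalDegree ≤ d) :
    (u ^ 2).totalDegree ≤ 2 * d :=
  (totalDegree_pow u 2).trans (Nat.mul_le_mul_left 2 hu)

/-- A linear form that is nonnegative on squares of degree at most `2 * d` is nonnegative on sums
of squares of degree at most `2 * d`. -/
theorem IsSOS.LForm_nonneg {n d : ℕ} {y : (Fin n →₀ ℕ) → ℝ}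
    (hy : ∀ u : MvPolynomial (Fin n) ℝ, u.totalDegree ≤ d → 0 ≤ LForm n y (u ^ 2))
    {p : MvPolynomial (Fin n) ℝ} (hp : IsSOS n p) (hdeg : p.totalDegree ≤ 2 * d) :
    0 ≤ LForm n y p := by
  obtain ⟨l, u, rfl⟩ := hp
  have hu (i : Fin l) : (u i).totalDegree ≤ d := by
    have := two_mul_totalDegree_le_totalDegree_sum_sq u i
    omega
  have hsum : LForm n y (∑ i, u i ^ 2) = ∑ i, LForm n y (u i ^ 2) := by
    rw [LForm_eq_sum_expsLE y hdeg]
    simp only [fun i => LForm_eq_sum_expsLE y (totalDegree_sq_le (hu i)), coeff_sum,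
      Finset.mul_sum]
    exact Finset.sum_comm
  rw [hsum]
  exact Finset.sum_nonneg fun i _ => hy (u i) (hu i)

/-- A polynomial of degree at most `2 * d` that is not a sum of squares is separated from the
squares by a rational linear form. -/
theorem exists_rat_LForm_neg_of_not_isSOS {n d : ℕ} {p : MvPolynomial (Fin n) ℝ}
    (hdeg : p.totalDegree ≤ 2 * d) (hp : ¬ IsSOS n p) :
    ∃ y : (Fin n →₀ ℕ) → ℚ,
      (∀ u : MvPolynomial (Fin n) ℝ, u.totalDegree ≤ d →
        0 ≤ LForm n (fun α => (y α : ℝ)) (u ^ 2)) ∧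
      LForm n (fun α => (y α : ℝ)) p < 0 := by
  classical
  let K : Set (MvPolynomial (Fin n) ℝ) :=
    insert (-p) ((fun c => polyOfVec n d c ^ 2) '' Metric.sphere 0 1)
  have hKcompact : IsCompact (coeffVec n (2 * d) '' K) := by
    rw [Set.image_insert_eq, Set.image_image]
    exact ((isCompact_sphere 0 1).image (continuous_coeffVec_polyOfVec_sq n d (2 * d))).insert _
  have hKdeg : convexHull ℝ K ⊆ restrictTotalDegree (Fin n) ℝ (2 * d) := by
    refine convexHull_min ?_ (Submodule.convex _)
    rintro _ (rfl | ⟨c, -, rfl⟩)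
    · exact neg_mem ((mem_restrictTotalDegree _ _ _).2 hdeg)
    · exact (mem_restrictTotalDegree _ _ _).2 (totalDegree_sq_le (totalDegree_polyOfVec_le c))
  have hKsub : K ⊆ insert (-p) ((· ^ 2) '' {u | u ≠ 0}) := by
    refine Set.insert_subset_insert ?_
    rintro _ ⟨c, hc, rfl⟩
    refine ⟨polyOfVec n d c, fun h => ?_, rfl⟩
    have hc0 : c = 0 := by rw [← coeffVec_polyOfVec c, h, map_zero]
    simp [hc0] at hc
  have h0 : (0 : expsLE n (2 * d) → ℝ) ∉ convexHull ℝ (coeffVec n (2 * d) '' K) := by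
    rw [← LinearMap.image_convexHull]
    rintro ⟨q, hq, hq0⟩
    obtain rfl := eq_zero_of_coeffVec_eq_zero ((mem_restrictTotalDegree _ _ _).1 (hKdeg hq)) hq0
    exact zero_notMem_convexHull_of_not_isSOS hp (convexHull_mono hKsub hq)
  obtain ⟨r, hr⟩ := exists_rat_forall_sum_pos hKcompact h0
  let y : (Fin n →₀ ℕ) → ℚ := fun α => if h : α ∈ expsLE n (2 * d) then r ⟨α, h⟩ else 0
  have hL {q : MvPolynomial (Fin n) ℝ} (hq : q.totalDegree ≤ 2 * d) :
      LForm n (fun α => (y α : ℝ)) q = ∑ α, (r α : ℝ) * coeffVec n (2 * d) q α := by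
    rw [LForm_eq_sum_expsLE _ hq, ← Finset.sum_coe_sort]
    simp [y]
  refine ⟨y, fun u hu => ?_, ?_⟩
  · rw [hL (totalDegree_sq_le hu)]
    by_cases hc : coeffVec n d u = 0
    · simp [eq_zero_of_coeffVec_eq_zero hu hc]
    set c := coeffVec n d u with hcdef
    have hu' : u = ‖c‖ • polyOfVec n d (‖c‖⁻¹ • c) := by
      rw [← polyOfVec_smul, smul_inv_smul₀ (norm_ne_zero_iff.2 hc), hcdef, polyOfVec_coeffVec hu]
    have hsphere : ‖c‖⁻¹ • c ∈ Metric.sphere (0 : expsLE n d → ℝ) 1 := by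
      simp [norm_smul, hc]
    have hpos := hr _ (Set.mem_image_of_mem _
      (Set.mem_insert_of_mem (-p) (Set.mem_image_of_mem _ hsphere)))
    rw [hu', smul_pow, map_smul]
    simp only [Pi.smul_apply, smul_eq_mul, mul_left_comm _ (‖c‖ ^ 2), ← Finset.mul_sum]
    exact mul_nonneg (sq_nonneg _) hpos.le
  · have hpos := hr _ (Set.mem_image_of_mem _ (Set.mem_insert (-p) _))
    rw [hL hdeg]
    simpa using hpos

/-- for `f ∈ ℚ[X]` and `d = ⌈deg f / 2⌉`, `f` is not a sum of squares
of real polynomials iff there is a rational sequence `ŷ` (indexed by multi-indices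
of degree `≤ 2d`; here defined on all multi-indices) with `L_ŷ(u²) ≥ 0` for every
real polynomial `u` of total degree `≤ d`, and `L_ŷ(f) < 0`. -/
theorem statement13 (n : ℕ) (f : MvPolynomial (Fin n) ℚ) :
    ¬ IsSOS n (f.map (algebraMap ℚ ℝ)) ↔
      ∃ yhat : (Fin n →₀ ℕ) → ℚ,
        (∀ u : MvPolynomial (Fin n) ℝ, u.totalDegree ≤ (f.totalDegree + 1) / 2 →
          0 ≤ LForm n (fun α => (yhat α : ℝ)) (u ^ 2)) ∧
        LForm n (fun α => (yhat α : ℝ)) (f.map (algebraMap ℚ ℝ)) < 0 := by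
  have hdeg : (f.map (algebraMap ℚ ℝ)).totalDegree ≤ 2 * ((f.totalDegree + 1) / 2) := by
    have : (f.map (algebraMap ℚ ℝ)).totalDegree ≤ f.totalDegree :=
      Finset.sup_mono (support_map_subset _ _)
    omega
  refine ⟨exists_rat_LForm_neg_of_not_isSOS hdeg, ?_⟩
  rintro ⟨y, hy, hneg⟩ hsos
  exact (hsos.LForm_nonneg hy hdeg).not_gt hneg
end

section
/- The Motzkin polynomial f(X₁, X₂) = X₁⁴X₂² + X₁²X₂⁴ + 1 − 3X₁²X₂² is not a sum of squares of real polynomials; that is, there do not exist polynomials u₁,…,u_l ∈ ℝ[X₁, X₂] with f = Σ_i u_i². -/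
open MvPolynomial

/-- If `m + m` is only a sum of two exponents of `p` in the trivial way, then its coefficient in
`p ^ 2` is a square. -/
theorem coeff_add_self_sq {σ : Type*} (p : MvPolynomial σ ℝ) (m : σ →₀ ℕ)
    (h : ∀ a ∈ p.support, ∀ b ∈ p.support, a + b = m + m → a = m) :
    coeff (m + m) (p ^ 2) = coeff m p ^ 2 := by
  classical
  rw [sq, coeff_mul, Finset.sum_eq_single (m, m), sq]
  · rintro ⟨a, b⟩ hab hne
    rw [Finset.HasAntidiagonal.mem_antidiagonal] at hab
    by_contra hc
    obtain ⟨ha, hb⟩ := mul_ne_zero_iff.mp hc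
    obtain rfl := h a (mem_support_iff.mpr ha) b (mem_support_iff.mpr hb) hab
    exact hne (Prod.ext rfl (add_left_cancel hab))
  · intro h
    simp at h

/-- For an injective additive weight, every exponent occurring in a family `u` is dominated by
some `m` such that `m + m` is an exponent of the sum of squares of `u`. -/
theorem exists_le_weight_coeff_sum_sq_ne_zero {σ ι M : Type*} [Fintype ι] [AddCommMonoid M]
    [LinearOrder M] [IsOrderedCancelAddMonoid M] (w : (σ →₀ ℕ) →+ M)
    (hw : Function.Injective w) (u : ι → MvPolynomial σ ℝ) {i : ι} {n : σ →₀ ℕ}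
    (hn : n ∈ (u i).support) :
    ∃ m, w n ≤ w m ∧ coeff (m + m) (∑ i, u i ^ 2) ≠ 0 := by
  classical
  have hmem : ∀ {j a}, a ∈ (u j).support → a ∈ Finset.univ.biUnion fun i => (u i).support :=
    fun {j a} ha => Finset.mem_biUnion.mpr ⟨j, Finset.mem_univ j, ha⟩
  obtain ⟨m, hm, hmax⟩ := Finset.exists_max_image _ w ⟨n, hmem hn⟩
  refine ⟨m, hmax n (hmem hn), ?_⟩
  obtain ⟨j, -, hj⟩ := Finset.mem_biUnion.mp hm
  have hsq : ∀ i, coeff (m + m) (u i ^ 2) = coeff m (u i) ^ 2 := fun i =>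
    coeff_add_self_sq _ _ fun a ha b hb hab => hw <| by
      have hsum : w a + w b = w m + w m := by rw [← map_add, hab, map_add]
      exact ((add_eq_add_iff_eq_and_eq (hmax a (hmem ha)) (hmax b (hmem hb))).mp hsum).1
  simp only [coeff_sum, hsq]
  exact ne_of_gt (Finset.sum_pos' (fun i _ => sq_nonneg (coeff m (u i)))
    ⟨j, Finset.mem_univ j, sq_pos_of_ne_zero (mem_support_iff.mp hj)⟩)

/-- The weight `a * m 0 + b * m 1` on exponents in two variables, with ties broken by `m 0`. -/
def lexWeight (a b : ℤ) : (Fin 2 →₀ ℕ) →+ Lex (ℤ × ℤ) where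
  toFun m := toLex (a * m 0 + b * m 1, (m 0 : ℤ))
  map_zero' := by simp
  map_add' m n := by
    rw [← toLex_add, Prod.mk_add_mk]
    simp only [Finsupp.add_apply, Nat.cast_add]
    congr 2
    ring

theorem lexWeight_injective (a : ℤ) {b : ℤ} (hb : b ≠ 0) :
    Function.Injective (lexWeight a b) := by
  intro m n h
  obtain ⟨h₁, h₀⟩ := Prod.ext_iff.mp (toLex.injective h)
  simp only at h₁ h₀
  rw [h₀, add_right_inj, mul_right_inj' hb] at h₁
  ext i
  fin_cases i
  · exact_mod_cast h₀
  · exact_mod_cast h₁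

theorem le_of_lexWeight_le {a b : ℤ} {m n : Fin 2 →₀ ℕ} (h : lexWeight a b m ≤ lexWeight a b n) :
    a * m 0 + b * m 1 ≤ a * n 0 + b * n 1 :=
  Prod.Lex.monotone_fst _ _ h

theorem coeff_motzkin (m : Fin 2 →₀ ℕ) :
    coeff m (X 0 ^ 4 * X 1 ^ 2 + X 0 ^ 2 * X 1 ^ 4 + 1 - 3 * X 0 ^ 2 * X 1 ^ 2 :
        MvPolynomial (Fin 2) ℝ) =
      (if m 0 = 4 ∧ m 1 = 2 then 1 else 0) + (if m 0 = 2 ∧ m 1 = 4 then 1 else 0) +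
        (if m 0 = 0 ∧ m 1 = 0 then 1 else 0) - 3 * (if m 0 = 2 ∧ m 1 = 2 then 1 else 0) := by
  classical
  have hX (i j : ℕ) : coeff m (X 0 ^ i * X 1 ^ j : MvPolynomial (Fin 2) ℝ) =
      if m 0 = i ∧ m 1 = j then 1 else 0 := by
    rw [X_pow_eq_monomial, X_pow_eq_monomial, monomial_mul, coeff_monomial, one_mul]
    congr 1
    simp [Finsupp.ext_iff, Fin.forall_fin_two, eq_comm]
  have hone := hX 0 0
  rw [pow_zero, pow_zero, one_mul] at hone
  have hthree : (3 : MvPolynomial (Fin 2) ℝ) = C 3 := (map_ofNat C 3).symm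
  rw [mul_assoc, hthree, coeff_sub, coeff_add, coeff_add, coeff_C_mul, hX, hX, hX, hone]

/-- the Motzkin polynomial
`f(X₁,X₂) = X₁⁴X₂² + X₁²X₂⁴ + 1 − 3X₁²X₂²` is not a sum of squares of real
polynomials. -/
theorem statement14 :
    ¬ ∃ (l : ℕ) (u : Fin l → MvPolynomial (Fin 2) ℝ),
      (X 0 ^ 4 * X 1 ^ 2 + X 0 ^ 2 * X 1 ^ 4 + 1 - 3 * X 0 ^ 2 * X 1 ^ 2 :
        MvPolynomial (Fin 2) ℝ) = ∑ i, u i ^ 2 := by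
  rintro ⟨l, u, hu⟩
  have hweight (a b : ℤ) (hb : b ≠ 0) (i) (n) (hn : n ∈ (u i).support) :
      a * n 0 + b * n 1 ≤ 2 * a + b ∨ a * n 0 + b * n 1 ≤ a + 2 * b ∨
        a * n 0 + b * n 1 ≤ 0 ∨ a * n 0 + b * n 1 ≤ a + b := by
    obtain ⟨m, hle, hm⟩ :=
      exists_le_weight_coeff_sum_sq_ne_zero _ (lexWeight_injective a hb) u hn
    have hle := le_of_lexWeight_le hle
    rw [← hu, coeff_motzkin] at hm
    have hadd₀ := Finsupp.add_apply m m 0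
    have hadd₁ := Finsupp.add_apply m m 1
    have hcases : (m 0 = 2 ∧ m 1 = 1) ∨ (m 0 = 1 ∧ m 1 = 2) ∨ (m 0 = 0 ∧ m 1 = 0) ∨
        (m 0 = 1 ∧ m 1 = 1) := by
      by_contra hc
      refine hm ?_
      rw [if_neg (by omega), if_neg (by omega), if_neg (by omega), if_neg (by omega)]
      norm_num
    rcases hcases with ⟨h₀, h₁⟩ | ⟨h₀, h₁⟩ | ⟨h₀, h₁⟩ | ⟨h₀, h₁⟩ <;>
      rw [h₀, h₁] at hle <;> push_cast at hle
    · left; linarith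
    · right; left; linarith
    · right; right; left; linarith
    · right; right; right; linarith
  let e : Fin 2 →₀ ℕ := Finsupp.single 0 1 + Finsupp.single 1 1
  have he₀ : e 0 = 1 := by simp [e]
  have he₁ : e 1 = 1 := by simp [e]
  have hsq (i) : coeff (e + e) (u i ^ 2) = coeff e (u i) ^ 2 := by
    refine coeff_add_self_sq _ _ fun a ha b hb hab => ?_
    have h₀ : a 0 + b 0 = 2 := by rw [← Finsupp.add_apply, hab, Finsupp.add_apply, he₀]
    have h₁ : a 1 + b 1 = 2 := by rw [← Finsupp.add_apply, hab, Finsupp.add_apply, he₁]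
    have ha₁ := hweight 1 (-2) (by norm_num) i a ha
    have ha₂ := hweight (-2) 1 (by norm_num) i a ha
    have hb₁ := hweight 1 (-2) (by norm_num) i b hb
    have hb₂ := hweight (-2) 1 (by norm_num) i b hb
    have ha₃ := hweight 1 1 (by norm_num) i a ha
    have hb₃ := hweight 1 1 (by norm_num) i b hb
    ext k
    fin_cases k
    · change a 0 = e 0
      omega
    · change a 1 = e 1
      omega
  have hcoeff := congrArg (coeff (e + e)) hu
  rw [coeff_motzkin, coeff_sum, Finset.sum_congr rfl fun i _ => hsq i] at hcoeff
  have hnonneg : 0 ≤ ∑ i, coeff e (u i) ^ 2 := Finset.sum_nonneg fun i _ => sq_nonneg _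
  rw [← hcoeff] at hnonneg
  norm_num [he₀, he₁] at hnonneg
end

section
/- Let n = 4 and in ℝ[X₁,…,X₄] define M₂ = Σ_{i=1}^4 X_i², M₄ = Σ_{i=1}^4 X_i⁴, M₆ = Σ_{i=1}^4 X_i⁶, and f_{4,2} = 6·M₆ − 5·M₂·M₄ + M₂³. Then there do not exist polynomials u₁,…,u_l, v₁,…,v_{l′} ∈ ℝ[X₁,…,X₄] with deg(v_j) ≤ 1 for every j and Σ_j v_j² ≠ 0 such that f_{4,2} · Σ_j v_j² = Σ_i u_i². In other words, f_{4,2} admits no Hilbert–Artin representation as a fraction of sums of squares with denominator of degree ≤ 2. -/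
open MvPolynomial

/-- The power sum `M_{n,r} = Σᵢ Xᵢʳ`. -/
noncomputable def powerSum (n r : ℕ) : MvPolynomial (Fin n) ℝ :=
  ∑ i : Fin n, X i ^ r

/-- The restriction of a polynomial to the line spanned by `z`, as a polynomial in the
line parameter. -/
noncomputable def lineRestrict {σ : Type*} (z : σ → ℝ) : MvPolynomial σ ℝ →ₐ[ℝ] Polynomial ℝ :=
  aeval fun i => Polynomial.C (z i) * Polynomial.X

/-- The sextic `f_{4,2}`. -/
noncomputable def sextic : MvPolynomial (Fin 4) ℝ :=
  6 * powerSum 4 6 - 5 * powerSum 4 2 * powerSum 4 4 + (powerSum 4 2) ^ 3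

lemma lineRestrict_monomial {σ : Type*} (z : σ → ℝ) (d : σ →₀ ℕ) (a : ℝ) :
    lineRestrict z (monomial d a) = Polynomial.monomial d.degree (eval z (monomial d a)) := by
  simp only [lineRestrict, aeval_monomial, eval_monomial, mul_pow, Finsupp.prod_mul]
  have h : (d.prod fun _ k => (Polynomial.X : Polynomial ℝ) ^ k) = Polynomial.X ^ d.degree := by
    rw [Finsupp.degree_apply, Finsupp.prod, Finset.prod_pow_eq_pow_sum]
  rw [h, ← Polynomial.C_mul_X_pow_eq_monomial, map_mul]
  simp only [Finsupp.prod, map_prod, map_pow, mul_assoc]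
  rfl

lemma coeff_lineRestrict {σ : Type*} (z : σ → ℝ) (u : MvPolynomial σ ℝ) (k : ℕ) :
    (lineRestrict z u).coeff k = eval z (homogeneousComponent k u) := by
  induction u using MvPolynomial.induction_on' with
  | add p q hp hq => simp only [map_add, Polynomial.coeff_add, hp, hq]
  | monomial d a =>
    rw [lineRestrict_monomial, Polynomial.coeff_monomial,
      homogeneousComponent_of_mem (isHomogeneous_monomial a rfl)]
    split_ifs with h h' h'
    · rfl
    · exact absurd h.symm h'
    · exact absurd h'.symm h
    · simp

lemma coeff_lineRestrict_single {σ : Type*} [DecidableEq σ] (i : σ) (u : MvPolynomial σ ℝ)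
    (k : ℕ) :
    (lineRestrict (Pi.single i 1) u).coeff k = coeff (Finsupp.single i k) u := by
  induction u using MvPolynomial.induction_on' with
  | add p q hp hq => simp only [map_add, Polynomial.coeff_add, coeff_add, hp, hq]
  | monomial d a =>
    rw [lineRestrict_monomial, Polynomial.coeff_monomial, coeff_monomial, eval_monomial]
    by_cases hd : d = Finsupp.single i k
    · subst hd
      simp
    · rw [if_neg hd, ite_eq_right_iff]
      intro hdeg
      obtain ⟨j, hj, hji⟩ : ∃ j ∈ d.support, j ≠ i := by
        by_contra! h
        apply hd
        have hsub : d.support ⊆ {i} := fun j hj => by simpa using h j hj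
        rw [Finsupp.support_subset_singleton] at hsub
        rw [hsub, Finsupp.degree_single] at hdeg
        rw [hsub, hdeg]
      rw [Finsupp.prod, Finset.prod_eq_zero hj, mul_zero]
      rw [Pi.single_eq_of_ne hji, zero_pow (by simpa using hj)]

lemma lineRestrict_powerSum {n : ℕ} (z : Fin n → ℝ) (r : ℕ) :
    lineRestrict z (powerSum n r) = Polynomial.C (eval z (powerSum n r)) * Polynomial.X ^ r := by
  simp [lineRestrict, powerSum, mul_pow, Finset.sum_mul]

lemma lineRestrict_sextic (z : Fin 4 → ℝ) :
    lineRestrict z sextic = Polynomial.C (eval z sextic) * Polynomial.X ^ 6 := by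
  simp only [sextic, map_add, map_sub, map_mul, map_pow, map_ofNat, lineRestrict_powerSum]
  ring

/-- In a sum of squares of real univariate polynomials the leading terms do not cancel. -/
lemma natDegree_le_of_sum_sq {ι : Type*} [Fintype ι] (p : ι → Polynomial ℝ) {d : ℕ}
    (h : (∑ i, p i ^ 2).natDegree ≤ 2 * d) (i : ι) : (p i).natDegree ≤ d := by
  suffices H : ∀ k, (∀ i, (p i).natDegree ≤ d + k) → ∀ i, (p i).natDegree ≤ d from
    H (∑ i, (p i).natDegree) (fun i => le_add_left
      (Finset.single_le_sum (f := fun i => (p i).natDegree) (fun _ _ => Nat.zero_le _)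
        (Finset.mem_univ i))) i
  intro k
  induction k with
  | zero => exact id
  | succ k ih =>
    intro hk
    apply ih
    have h0 : (∑ i, p i ^ 2).coeff (2 * (d + (k + 1))) = 0 :=
      Polynomial.coeff_eq_zero_of_natDegree_lt (by omega)
    rw [Polynomial.finsetSum_coeff] at h0
    rw [Finset.sum_congr rfl fun i _ => Polynomial.coeff_pow_of_natDegree_le (hk i),
      Finset.sum_eq_zero_iff_of_nonneg fun _ _ => sq_nonneg _] at h0
    intro i
    rw [Polynomial.natDegree_le_iff_coeff_eq_zero]
    intro N hN
    rcases (Nat.succ_le_of_lt hN).eq_or_lt with rfl | hlt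
    · exact pow_eq_zero_iff two_ne_zero |>.1 (h0 i (Finset.mem_univ i))
    · exact Polynomial.coeff_eq_zero_of_natDegree_lt ((hk i).trans_lt hlt)

lemma eq_zero_of_sum_sq_eq_zero {ι : Type*} [Fintype ι] (p : ι → Polynomial ℝ)
    (h : ∑ i, p i ^ 2 = 0) (i : ι) : p i = 0 := by
  refine Polynomial.funext fun t => ?_
  have ht := congrArg (Polynomial.eval t) h
  simp only [Polynomial.eval_finsetSum, Polynomial.eval_pow, Polynomial.eval_zero] at ht
  rw [Finset.sum_eq_zero_iff_of_nonneg fun _ _ => sq_nonneg _] at ht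
  simpa using ht i (Finset.mem_univ i)

/-- A cubature identity for ternary quartic forms supported on the zeros of Robinson's form. -/
lemma ternary_quartic_identity (w : MvPolynomial (Fin 3) ℝ) (hw : w.IsHomogeneous 4) :
    ∑ i : Fin 3, eval (Pi.single i 1) w =
      (eval ![1, 1, 0] w + eval ![1, -1, 0] w + eval ![1, 0, 1] w + eval ![1, 0, -1] w
        + eval ![0, 1, 1] w + eval ![0, 1, -1] w) / 2
      - (eval ![1, 1, 1] w + eval ![1, 1, -1] w + eval ![1, -1, 1] w
        + eval ![1, -1, -1] w) / 4 := by
  have key : ∀ a b c : ℕ, a + b + c = 4 →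
      ((0 : ℝ) ^ b * 0 ^ c + 0 ^ a * 0 ^ c + 0 ^ a * 0 ^ b) =
        (0 ^ c + (-1) ^ b * 0 ^ c + 0 ^ b + 0 ^ b * (-1) ^ c + 0 ^ a + 0 ^ a * (-1) ^ c) / 2
        - (1 + (-1) ^ c + (-1) ^ b + (-1) ^ b * (-1) ^ c) / 4 := by
    intro a b c h
    have ha : a ≤ 4 := by omega
    have hb : b ≤ 4 := by omega
    obtain rfl : c = 4 - a - b := by omega
    interval_cases a <;> interval_cases b <;> first | omega | norm_num
  rw [Fin.sum_univ_three]
  simp only [eval_eq', ← Finset.sum_add_distrib, Finset.sum_div, ← Finset.sum_sub_distrib]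
  refine Finset.sum_congr rfl fun d hd => ?_
  have hdeg : d 0 + d 1 + d 2 = 4 := by
    have := hw (mem_support_iff.1 hd)
    simpa [Finsupp.weight_apply, Finsupp.sum_fintype, Fin.sum_univ_three] using this
  have := key _ _ _ hdeg
  simp [Fin.prod_univ_three, Pi.single_apply]
  linear_combination coeff d w * this

/-- A quartic form vanishing at all zeros of `f_{4,2}` vanishes at the unit vectors. -/
lemma eval_single_eq_zero (w : MvPolynomial (Fin 4) ℝ) (hw : w.IsHomogeneous 4)
    (hz : ∀ z, eval z sextic = 0 → eval z w = 0) (i : Fin 4) : eval (Pi.single i 1) w = 0 := by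
  have face : ∀ m : Fin 4, ∑ j : Fin 3, eval (Pi.single (m.succAbove j) 1) w = 0 := by
    intro m
    set g : Fin 4 → MvPolynomial (Fin 3) ℝ := m.insertNth 0 X with hg
    have hghom : ∀ j, (g j).IsHomogeneous 1 := by
      intro j
      refine m.succAboveCases ?_ (fun j => ?_) j
      · simpa [hg] using isHomogeneous_zero _ _ _
      · simpa [hg] using isHomogeneous_X _ _
    have heval : ∀ x, eval x (aeval g w) = eval (m.insertNth 0 x : Fin 4 → ℝ) w := by
      intro x
      have : (fun j => eval x (g j)) = (m.insertNth 0 x : Fin 4 → ℝ) := by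
        funext j
        refine m.succAboveCases ?_ (fun j => ?_) j <;> simp [hg]
      rw [← this]
      clear hw hz
      induction w using MvPolynomial.induction_on with
      | C a => simp
      | add p q hp hq => simp only [map_add, hp, hq]
      | mul_X p j hp => simp only [map_mul, hp, aeval_X, eval_X]
    have hzero : ∀ x : Fin 3 → ℝ, 6 * (∑ j, x j ^ 6) - 5 * (∑ j, x j ^ 2) * (∑ j, x j ^ 4)
        + (∑ j, x j ^ 2) ^ 3 = 0 → eval x (aeval g w) = 0 := by
      intro x hx
      rw [heval]
      apply hz
      simpa [sextic, powerSum, Fin.sum_univ_succAbove _ m] using hx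
    have hsingle : ∀ j, eval (Pi.single (m.succAbove j) 1) w =
        eval (Pi.single j 1) (aeval g w) := by
      intro j
      rw [heval]
      congr 2
      funext k
      refine m.succAboveCases ?_ (fun k => ?_) k <;> simp [Pi.single_apply]
    have hhom : (aeval g w).IsHomogeneous 4 := hw.aeval g hghom
    rw [Finset.sum_congr rfl fun j _ => hsingle j, ternary_quartic_identity _ hhom]
    iterate 10 rw [hzero _ (by simp [Fin.sum_univ_three]; norm_num)]
    norm_num
  have total : ∀ m : Fin 4, ∑ j, eval (Pi.single j 1) w = eval (Pi.single m 1) w := by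
    intro m
    rw [Fin.sum_univ_succAbove _ m, face m, add_zero]
  have h4 := Fin.sum_univ_four fun j : Fin 4 => eval (Pi.single j 1) w
  have := total i
  rw [← total 0, ← total 1, ← total 2, ← total 3] at h4
  linarith

/-- The denominators in a degree-two representation of `f_{4,2}` have no linear terms. -/
lemma coeff_single_eq_zero {ι κ : Type*} [Fintype ι] [Fintype κ]
    (u : ι → MvPolynomial (Fin 4) ℝ) (v : κ → MvPolynomial (Fin 4) ℝ)
    (hv : ∀ j, (v j).totalDegree ≤ 1) (h : sextic * ∑ j, v j ^ 2 = ∑ i, u i ^ 2)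
    (k : Fin 4) (j : κ) : coeff (Finsupp.single k 1) (v j) = 0 := by
  have hline : ∀ z, Polynomial.X ^ 6 * (Polynomial.C (eval z sextic) *
      ∑ j, lineRestrict z (v j) ^ 2) = ∑ i, lineRestrict z (u i) ^ 2 := by
    intro z
    have := congrArg (lineRestrict z) h
    simp only [map_mul, map_sum, map_pow, lineRestrict_sextic] at this
    rw [← this]
    ring
  set e : Fin 4 → ℝ := Pi.single k 1 with he
  have hu4 : ∀ i, (lineRestrict e (u i)).coeff 4 = 0 := by
    intro i
    rw [coeff_lineRestrict]
    refine eval_single_eq_zero _ (homogeneousComponent_isHomogeneous _ _) (fun z hz => ?_) k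
    have := hline z
    rw [hz, map_zero, zero_mul, mul_zero] at this
    rw [← coeff_lineRestrict, eq_zero_of_sum_sq_eq_zero _ this.symm i, Polynomial.coeff_zero]
  have hfe : eval e sextic = 2 := by
    have hpow : ∀ r, r ≠ 0 → eval e (powerSum 4 r) = 1 := by
      intro r hr
      simp [powerSum, he, Pi.single_apply, ite_pow, hr]
    simp only [sextic, map_add, map_sub, map_mul, map_pow, map_ofNat]
    rw [hpow 6 (by norm_num), hpow 2 (by norm_num), hpow 4 (by norm_num)]
    norm_num
  have hvdeg : ∀ j, (lineRestrict e (v j)).natDegree ≤ 1 := fun j =>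
    aeval_natDegree_le _ (hv j) _ fun _ =>
      (Polynomial.natDegree_C_mul_le _ _).trans Polynomial.natDegree_X_le
  have hsumdeg : (∑ j, lineRestrict e (v j) ^ 2).natDegree ≤ 2 :=
    Polynomial.natDegree_sum_le_of_forall_le _ _ fun j _ =>
      Polynomial.natDegree_pow_le_of_le 2 (hvdeg j)
  have hudeg : ∀ i, (lineRestrict e (u i)).natDegree ≤ 4 := by
    apply natDegree_le_of_sum_sq
    rw [← hline e]
    refine Polynomial.natDegree_mul_le_of_le (Polynomial.natDegree_X_pow_le 6) (n := 2) ?_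
    exact (Polynomial.natDegree_C_mul_le _ _).trans hsumdeg
  have hcoeff := congrArg (fun p => Polynomial.coeff p (2 + 6)) (hline e)
  simp only [Polynomial.coeff_X_pow_mul, Polynomial.coeff_C_mul, Polynomial.finsetSum_coeff,
    hfe] at hcoeff
  rw [Finset.sum_congr rfl fun j _ => Polynomial.coeff_pow_of_natDegree_le (m := 2) (hvdeg j),
    Finset.sum_congr rfl fun i _ => Polynomial.coeff_pow_of_natDegree_le (m := 2) (hudeg i)]
    at hcoeff
  simp only [hu4, ne_eq, OfNat.ofNat_ne_zero, not_false_eq_true, zero_pow, Finset.sum_const_zero,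
    mul_eq_zero, false_or] at hcoeff
  rw [Finset.sum_eq_zero_iff_of_nonneg fun _ _ => sq_nonneg _] at hcoeff
  rw [← coeff_lineRestrict_single k]
  simpa using hcoeff j (Finset.mem_univ j)

/-- the even symmetric sextic
`f_{4,2} = 6·M₆ − 5·M₂·M₄ + M₂³` in `ℝ[X₁,…,X₄]` admits no Hilbert–Artin
representation with denominator of degree ≤ 2: there are no polynomials
`u₁,…,u_l, v₁,…,v_{l'}` with `deg(vⱼ) ≤ 1` for all `j` and `Σⱼ vⱼ² ≠ 0` such
that `f_{4,2} · Σⱼ vⱼ² = Σᵢ uᵢ²`. -/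
theorem statement16 :
    ¬ ∃ (l l' : ℕ) (u : Fin l → MvPolynomial (Fin 4) ℝ)
        (v : Fin l' → MvPolynomial (Fin 4) ℝ),
        (∀ j, (v j).totalDegree ≤ 1) ∧ (∑ j, v j ^ 2) ≠ 0 ∧
        (6 * powerSum 4 6 - 5 * powerSum 4 2 * powerSum 4 4 + (powerSum 4 2) ^ 3) *
          (∑ j, v j ^ 2) = ∑ i, u i ^ 2 := by
  rintro ⟨l, l', u, v, hv, hne, h⟩
  change sextic * _ = _ at h
  have hconst : ∀ j, v j = C (coeff 0 (v j)) := by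
    intro j
    ext d
    rw [coeff_C]
    split_ifs with hd
    · rw [hd]
    by_cases hd1 : d.degree ≤ 1
    · have hdeg : d.degree = 1 := by
        have := (Finsupp.degree_eq_zero_iff d).not.2 (Ne.symm hd)
        omega
      obtain ⟨k, rfl⟩ := (Finsupp.sum_eq_one_iff d).1 hdeg
      exact coeff_single_eq_zero u v hv h k j
    · exact coeff_eq_zero_of_totalDegree_lt ((hv j).trans_lt
        (by simpa [Finsupp.degree_apply] using hd1))
  have hX : sextic * ∑ j, (X 0 * v j) ^ 2 = ∑ i, (X 0 * u i) ^ 2 := by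
    simp only [mul_pow, ← Finset.mul_sum, ← h]
    ring
  have hXdeg : ∀ j, (X 0 * v j).totalDegree ≤ 1 := by
    intro j
    rw [hconst j]
    exact (totalDegree_mul _ _).trans (by simp)
  apply hne
  refine Finset.sum_eq_zero fun j _ => ?_
  have h0 := coeff_single_eq_zero _ _ hXdeg hX 0 j
  rw [hconst j, mul_comm, coeff_C_mul, coeff_X, if_pos rfl, mul_one] at h0
  rw [hconst j, h0]
  simp
end

section
/- Let n = 5 and in ℝ[X₁,…,X₅] define M₂ = Σ_{i=1}^5 X_i², M₄ = Σ_{i=1}^5 X_i⁴, M₆ = Σ_{i=1}^5 X_i⁶, and f_{5,3} = 12·M₆ − 7·M₂·M₄ + M₂³. Then there do not exist polynomials u₁,…,u_l, v₁,…,v_{l′} ∈ ℝ[X₁,…,X₅] with deg(v_j) ≤ 2 for every j and Σ_j v_j² ≠ 0 such that f_{5,3} · Σ_j v_j² = Σ_i u_i². In other words, f_{5,3} admits no Hilbert–Artin representation as a fraction of sums of squares with denominator of degree ≤ 4. -/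
open MvPolynomial

section DegreeBound

variable {σ ι : Type*} [LinearOrder σ] [WellFoundedGT σ] [Fintype ι]

/-- Leading terms of squares over `ℝ` cannot cancel, so every polynomial occurring in a sum of
squares of degree at most `2 * d` has degree at most `d`. -/
theorem totalDegree_le_of_sum_sq {u : ι → MvPolynomial σ ℝ} {d : ℕ}
    (h : (∑ i, u i ^ 2).totalDegree ≤ 2 * d) (i : ι) : (u i).totalDegree ≤ d := by
  obtain ⟨i₀, -, hmax⟩ := Finset.exists_max_image Finset.univ
    (fun j => MonomialOrder.degLex.toSyn (MonomialOrder.degLex.degree (u j))) ⟨i, Finset.mem_univ i⟩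
  refine (degLex_totalDegree_monotone (hmax i (Finset.mem_univ i))).trans ?_
  by_cases h0 : u i₀ = 0
  · simp [h0]
  set m := MonomialOrder.degLex.degree (u i₀)
  have hcoeff : (∑ j, u j ^ 2).coeff (m + m) = ∑ j, (u j).coeff m ^ 2 := by
    rw [coeff_sum]
    refine Finset.sum_congr rfl fun j _ => ?_
    rw [sq, sq, MonomialOrder.coeff_mul_of_add_of_degree_le (hmax j (Finset.mem_univ j))
      (hmax j (Finset.mem_univ j))]
  have hpos : 0 < ∑ j, (u j).coeff m ^ 2 := by
    refine Finset.sum_pos' (fun j _ => sq_nonneg _) ⟨i₀, Finset.mem_univ _, ?_⟩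
    have : (u i₀).coeff m ≠ 0 := MonomialOrder.degLex.leadingCoeff_ne_zero_iff.mpr h0
    positivity
  have hmem : m + m ∈ (∑ j, u j ^ 2).support := by
    rw [mem_support_iff, hcoeff]
    exact hpos.ne'
  have hle := (le_totalDegree hmem).trans h
  have hdeg : (m + m).degree ≤ 2 * d := hle
  rw [map_add] at hdeg
  have : m.degree = (u i₀).totalDegree := degree_degLexDegree
  omega

end DegreeBound

/-- A polynomial of degree at most two is a quadratic function. -/
theorem exists_quadratic_of_totalDegree_le_two {σ : Type*} [Fintype σ] [DecidableEq σ]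
    {v : MvPolynomial σ ℝ} (hv : v.totalDegree ≤ 2) :
    ∃ (α : ℝ) (β : σ → ℝ) (q : σ → σ → ℝ),
      v = C α + ∑ i, C (β i) * X i + ∑ i, ∑ j, C (q i j) * (X i * X j) := by
  have hmon : ∀ m ∈ v.support, ∀ c : ℝ, ∃ (α : ℝ) (β : σ → ℝ) (q : σ → σ → ℝ),
      monomial m c = C α + ∑ i, C (β i) * X i + ∑ i, ∑ j, C (q i j) * (X i * X j) := by
    intro m hm c
    have hdeg : m.degree ≤ 2 := (le_totalDegree hm).trans hv
    have hsplit : ∀ m : σ →₀ ℕ, m ≠ 0 → ∃ i m', m = Finsupp.single i 1 + m' := by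
      intro m hm
      obtain ⟨i, hi⟩ := Finsupp.ne_iff.mp hm
      refine ⟨i, m - Finsupp.single i 1, (add_tsub_cancel_of_le ?_).symm⟩
      rw [Finsupp.single_le_iff]
      exact Nat.one_le_iff_ne_zero.mpr hi
    by_cases h0 : m = 0
    · exact ⟨c, 0, 0, by simp [h0]⟩
    obtain ⟨i, m', rfl⟩ := hsplit m h0
    by_cases h1 : m' = 0
    · refine ⟨0, Pi.single i c, 0, ?_⟩
      rw [Finset.sum_eq_single i (by intro j _ hj; simp [hj]) (by simp)]
      simp [h1, C_mul_X_eq_monomial]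
    obtain ⟨j, m'', rfl⟩ := hsplit m' h1
    have h2 : m'' = 0 := by
      rw [map_add, map_add, Finsupp.degree_single, Finsupp.degree_single] at hdeg
      exact (Finsupp.degree_eq_zero_iff _).mp (by omega)
    refine ⟨0, 0, Pi.single i (Pi.single j c), ?_⟩
    have hsum : ∑ k, ∑ l, C (σ := σ) ((Pi.single i (Pi.single j c) : σ → σ → ℝ) k l) * (X k * X l) =
        C c * (X i * X j) := by
      rw [Finset.sum_eq_single i (by intro k _ hk; simp [hk]) (by simp),
        Finset.sum_eq_single j (by intro k _ hk; simp [hk]) (by simp)]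
      simp
    rw [hsum, h2, add_zero, ← mul_assoc, C_mul_X_eq_monomial, X, monomial_mul]
    simp
  choose! α β q h using hmon
  refine ⟨∑ m ∈ v.support, α m (v.coeff m), fun i => ∑ m ∈ v.support, β m (v.coeff m) i,
    fun i j => ∑ m ∈ v.support, q m (v.coeff m) i j, ?_⟩
  conv_lhs => rw [v.as_sum, Finset.sum_congr rfl fun m hm => h m hm (v.coeff m)]
  simp only [map_sum, Finset.sum_mul, Finset.sum_add_distrib]
  congr 1
  · rw [Finset.sum_comm (s := v.support)]
  · rw [Finset.sum_comm (s := v.support)]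
    exact Finset.sum_congr rfl fun i _ => Finset.sum_comm

section GridFunctionals

/-- Functionals on univariate polynomials supported on the points `-t, 0, t`. -/
inductive GridFunctional
  | zero
  | even
  | odd
  | diff
  deriving DecidableEq

namespace GridFunctional

/-- The value on the `n`-th power: evaluation at zero, the even and the odd part of the evaluation
at `t`, and the difference of the even part and the evaluation at zero. -/
noncomputable def onPow (t : ℝ) : GridFunctional → ℕ → ℝ
  | zero, n => 0 ^ n
  | even, n => (t ^ n + (-t) ^ n) / 2
  | odd, n => (t ^ n - (-t) ^ n) / 2
  | diff, n => (t ^ n + (-t) ^ n) / 2 - 0 ^ n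

/-- The least degree that is not annihilated, for `odd` and `diff`. -/
def order : GridFunctional → ℕ
  | odd => 1
  | diff => 2
  | _ => 0

theorem onPow_eq_zero_of_lt_order (t : ℝ) {κ : GridFunctional} {n : ℕ} (h : n < κ.order) :
    κ.onPow t n = 0 := by
  cases κ
  · simp [order] at h
  · simp [order] at h
  · simp only [order, Nat.lt_one_iff] at h
    simp [onPow, h]
  · simp only [order] at h
    interval_cases n <;> simp [onPow]

/-- The two support points of a functional other than `diff`. -/
def point (t : ℝ) : GridFunctional → Bool → ℝ
  | zero, _ => 0
  | _, true => t
  | _, false => -t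

/-- The weights of the two support points of a functional other than `diff`. -/
noncomputable def weight : GridFunctional → Bool → ℝ
  | odd, false => -1 / 2
  | _, _ => 1 / 2

theorem onPow_eq_sum (t : ℝ) {κ : GridFunctional} (h : κ ≠ diff) (n : ℕ) :
    κ.onPow t n = ∑ b, κ.weight b * κ.point t b ^ n := by
  cases κ <;> simp [onPow, weight, point] at h ⊢ <;> ring

end GridFunctional

open GridFunctional

variable (t : ℝ) (u : MvPolynomial (Fin 5) ℝ)

/-- The tensor product of five grid functionals. -/
noncomputable def gridApply (κ : Fin 5 → GridFunctional) : ℝ :=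
  ∑ m ∈ u.support, u.coeff m * ∏ k, (κ k).onPow t (m k)

theorem gridApply_eq_sum_eval {κ : Fin 5 → GridFunctional} (hκ : ∀ k, κ k ≠ diff) :
    gridApply t u κ = ∑ b : Fin 5 → Bool,
      (∏ k, (κ k).weight (b k)) * eval (fun k => (κ k).point t (b k)) u := by
  simp only [gridApply, eval_eq', onPow_eq_sum t (hκ _), Finset.prod_univ_sum, Finset.mul_sum,
    Fintype.piFinset_univ]
  rw [Finset.sum_comm]
  refine Finset.sum_congr rfl fun b _ => Finset.sum_congr rfl fun m _ => ?_
  rw [Finset.prod_mul_distrib]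
  ring

variable {u} in
theorem gridApply_eq_zero_of_order {κ : Fin 5 → GridFunctional}
    (h : u.totalDegree < ∑ k, (κ k).order) : gridApply t u κ = 0 := by
  refine Finset.sum_eq_zero fun m hm => ?_
  have hdeg : m.degree ≤ u.totalDegree := le_totalDegree hm
  rw [Finsupp.degree_eq_sum] at hdeg
  obtain ⟨k, -, hk⟩ := Finset.exists_lt_of_sum_lt (hdeg.trans_lt h)
  rw [Finset.prod_eq_zero (Finset.mem_univ k) (onPow_eq_zero_of_lt_order t hk), mul_zero]

variable (a b c d e : GridFunctional)

theorem gridApply_even_zero : gridApply t u ![even, b, c, d, e] =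
    gridApply t u ![diff, b, c, d, e] + gridApply t u ![zero, b, c, d, e] := by
  simp only [gridApply, ← Finset.sum_add_distrib]
  refine Finset.sum_congr rfl fun m _ => ?_
  simp [Fin.prod_univ_five, onPow]
  ring

theorem gridApply_even_one : gridApply t u ![a, even, c, d, e] =
    gridApply t u ![a, diff, c, d, e] + gridApply t u ![a, zero, c, d, e] := by
  simp only [gridApply, ← Finset.sum_add_distrib]
  refine Finset.sum_congr rfl fun m _ => ?_
  simp [Fin.prod_univ_five, onPow]
  ring

theorem gridApply_even_two : gridApply t u ![a, b, even, d, e] =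
    gridApply t u ![a, b, diff, d, e] + gridApply t u ![a, b, zero, d, e] := by
  simp only [gridApply, ← Finset.sum_add_distrib]
  refine Finset.sum_congr rfl fun m _ => ?_
  simp [Fin.prod_univ_five, onPow]
  ring

theorem gridApply_even_three : gridApply t u ![a, b, c, even, e] =
    gridApply t u ![a, b, c, diff, e] + gridApply t u ![a, b, c, zero, e] := by
  simp only [gridApply, ← Finset.sum_add_distrib]
  refine Finset.sum_congr rfl fun m _ => ?_
  simp [Fin.prod_univ_five, onPow]
  ring

theorem gridApply_even_four : gridApply t u ![a, b, c, d, even] =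
    gridApply t u ![a, b, c, d, diff] + gridApply t u ![a, b, c, d, zero] := by
  simp only [gridApply, ← Finset.sum_add_distrib]
  refine Finset.sum_congr rfl fun m _ => ?_
  simp [Fin.prod_univ_five, onPow]
  ring

end GridFunctionals

/-- `u` vanishes at the points with coordinates in `{-t, 0, t}` that have zero, three or four
nonzero coordinates. -/
def VanishesOnGrid (t : ℝ) (u : MvPolynomial (Fin 5) ℝ) : Prop :=
  ∀ (z : Fin 5 → ℝ) (B : Finset (Fin 5)), B.card = 0 ∨ B.card = 3 ∨ B.card = 4 →
    (∀ k, z k ^ 2 = if k ∈ B then t ^ 2 else 0) → eval z u = 0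

section Relations

open GridFunctional

variable {t : ℝ} {u : MvPolynomial (Fin 5) ℝ}

theorem VanishesOnGrid.gridApply_eq_zero (hu : VanishesOnGrid t u) {κ : Fin 5 → GridFunctional}
    (hκ : ∀ k, κ k ≠ diff)
    (hcard : (Finset.univ.filter fun k => κ k ≠ zero).card = 0 ∨
      (Finset.univ.filter fun k => κ k ≠ zero).card = 3 ∨
      (Finset.univ.filter fun k => κ k ≠ zero).card = 4) :
    gridApply t u κ = 0 := by
  rw [gridApply_eq_sum_eval t u hκ]
  refine Finset.sum_eq_zero fun b _ => ?_
  rw [hu _ _ hcard, mul_zero]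
  intro k
  cases hk : κ k <;> cases b k <;> simp [point, hk]

theorem VanishesOnGrid.gridApply_odd (hu : VanishesOnGrid t u) (hdeg : u.totalDegree ≤ 5) :
    3 * gridApply t u ![odd, even, zero, zero, zero] =
        gridApply t u ![odd, zero, zero, zero, zero] := by
  have hd : ∀ κ : Fin 5 → GridFunctional, 5 < ∑ k, (κ k).order → gridApply t u κ = 0 :=
    fun κ h => gridApply_eq_zero_of_order t (hdeg.trans_lt h)
  have h1 := hu.gridApply_eq_zero (κ := ![odd, even, even, zero, zero]) (by decide) (by decide)
  have h2 := hu.gridApply_eq_zero (κ := ![odd, even, zero, even, zero]) (by decide) (by decide)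
  have h3 := hu.gridApply_eq_zero (κ := ![odd, even, zero, zero, even]) (by decide) (by decide)
  have h4 := hu.gridApply_eq_zero (κ := ![odd, zero, even, even, zero]) (by decide) (by decide)
  have h5 := hu.gridApply_eq_zero (κ := ![odd, zero, even, zero, even]) (by decide) (by decide)
  have h6 := hu.gridApply_eq_zero (κ := ![odd, zero, zero, even, even]) (by decide) (by decide)
  have h7 := hu.gridApply_eq_zero (κ := ![odd, even, even, even, zero]) (by decide) (by decide)
  have h8 := hu.gridApply_eq_zero (κ := ![odd, even, even, zero, even]) (by decide) (by decide)
  have h9 := hu.gridApply_eq_zero (κ := ![odd, even, zero, even, even]) (by decide) (by decide)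
  have h10 := hu.gridApply_eq_zero (κ := ![odd, zero, even, even, even]) (by decide) (by decide)
  have d1 := hd ![odd, diff, diff, diff, zero] (by decide)
  have d2 := hd ![odd, diff, diff, zero, diff] (by decide)
  have d3 := hd ![odd, diff, zero, diff, diff] (by decide)
  have d4 := hd ![odd, zero, diff, diff, diff] (by decide)
  simp only [gridApply_even_one, gridApply_even_two, gridApply_even_three,
    gridApply_even_four] at *
  linarith

theorem VanishesOnGrid.gridApply_odd' (hu : VanishesOnGrid t u) (hdeg : u.totalDegree ≤ 5) :
    3 * gridApply t u ![even, odd, zero, zero, zero] =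
        gridApply t u ![zero, odd, zero, zero, zero] := by
  have hd : ∀ κ : Fin 5 → GridFunctional, 5 < ∑ k, (κ k).order → gridApply t u κ = 0 :=
    fun κ h => gridApply_eq_zero_of_order t (hdeg.trans_lt h)
  have h1 := hu.gridApply_eq_zero (κ := ![even, odd, even, zero, zero]) (by decide) (by decide)
  have h2 := hu.gridApply_eq_zero (κ := ![even, odd, zero, even, zero]) (by decide) (by decide)
  have h3 := hu.gridApply_eq_zero (κ := ![even, odd, zero, zero, even]) (by decide) (by decide)
  have h4 := hu.gridApply_eq_zero (κ := ![zero, odd, even, even, zero]) (by decide) (by decide)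
  have h5 := hu.gridApply_eq_zero (κ := ![zero, odd, even, zero, even]) (by decide) (by decide)
  have h6 := hu.gridApply_eq_zero (κ := ![zero, odd, zero, even, even]) (by decide) (by decide)
  have h7 := hu.gridApply_eq_zero (κ := ![even, odd, even, even, zero]) (by decide) (by decide)
  have h8 := hu.gridApply_eq_zero (κ := ![even, odd, even, zero, even]) (by decide) (by decide)
  have h9 := hu.gridApply_eq_zero (κ := ![even, odd, zero, even, even]) (by decide) (by decide)
  have h10 := hu.gridApply_eq_zero (κ := ![zero, odd, even, even, even]) (by decide) (by decide)
  have d1 := hd ![diff, odd, diff, diff, zero] (by decide)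
  have d2 := hd ![diff, odd, diff, zero, diff] (by decide)
  have d3 := hd ![diff, odd, zero, diff, diff] (by decide)
  have d4 := hd ![zero, odd, diff, diff, diff] (by decide)
  simp only [gridApply_even_zero, gridApply_even_two, gridApply_even_three,
    gridApply_even_four] at *
  linarith

theorem VanishesOnGrid.gridApply_odd_odd (hu : VanishesOnGrid t u) (hdeg : u.totalDegree ≤ 5) :
    gridApply t u ![odd, odd, zero, zero, zero] = 0 := by
  have h1 := hu.gridApply_eq_zero (κ := ![odd, odd, even, zero, zero]) (by decide) (by decide)
  have h2 := hu.gridApply_eq_zero (κ := ![odd, odd, zero, even, zero]) (by decide) (by decide)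
  have h3 := hu.gridApply_eq_zero (κ := ![odd, odd, even, even, zero]) (by decide) (by decide)
  have d1 := gridApply_eq_zero_of_order t (u := u) (κ := ![odd, odd, diff, diff, zero])
    (hdeg.trans_lt (by decide))
  simp only [gridApply_even_two, gridApply_even_three] at *
  linarith

theorem VanishesOnGrid.gridApply_even (hu : VanishesOnGrid t u) (hdeg : u.totalDegree ≤ 5) :
    gridApply t u ![even, zero, zero, zero, zero] = 0 ∧
      gridApply t u ![zero, even, zero, zero, zero] = 0 ∧
      gridApply t u ![even, even, zero, zero, zero] = 0 := by
  have hd : ∀ κ : Fin 5 → GridFunctional, 5 < ∑ k, (κ k).order → gridApply t u κ = 0 :=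
    fun κ h => gridApply_eq_zero_of_order t (hdeg.trans_lt h)
  have h0 := hu.gridApply_eq_zero (κ := ![zero, zero, zero, zero, zero]) (by decide) (by decide)
  have h1 := hu.gridApply_eq_zero (κ := ![even, even, even, zero, zero]) (by decide) (by decide)
  have h2 := hu.gridApply_eq_zero (κ := ![even, even, zero, even, zero]) (by decide) (by decide)
  have h3 := hu.gridApply_eq_zero (κ := ![even, even, zero, zero, even]) (by decide) (by decide)
  have h4 := hu.gridApply_eq_zero (κ := ![even, zero, even, even, zero]) (by decide) (by decide)
  have h5 := hu.gridApply_eq_zero (κ := ![even, zero, even, zero, even]) (by decide) (by decide)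
  have h6 := hu.gridApply_eq_zero (κ := ![even, zero, zero, even, even]) (by decide) (by decide)
  have h7 := hu.gridApply_eq_zero (κ := ![zero, even, even, even, zero]) (by decide) (by decide)
  have h8 := hu.gridApply_eq_zero (κ := ![zero, even, even, zero, even]) (by decide) (by decide)
  have h9 := hu.gridApply_eq_zero (κ := ![zero, even, zero, even, even]) (by decide) (by decide)
  have h10 := hu.gridApply_eq_zero (κ := ![zero, zero, even, even, even]) (by decide) (by decide)
  have h11 := hu.gridApply_eq_zero (κ := ![zero, even, even, even, even]) (by decide) (by decide)
  have h12 := hu.gridApply_eq_zero (κ := ![even, zero, even, even, even]) (by decide) (by decide)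
  have h13 := hu.gridApply_eq_zero (κ := ![even, even, zero, even, even]) (by decide) (by decide)
  have h14 := hu.gridApply_eq_zero (κ := ![even, even, even, zero, even]) (by decide) (by decide)
  have h15 := hu.gridApply_eq_zero (κ := ![even, even, even, even, zero]) (by decide) (by decide)
  simp only [gridApply_even_zero, gridApply_even_one, gridApply_even_two, gridApply_even_three,
    gridApply_even_four, h0] at *
  rw [hd ![diff, diff, diff, zero, zero] (by decide)] at *
  rw [hd ![diff, diff, zero, diff, zero] (by decide)] at *
  rw [hd ![diff, diff, zero, zero, diff] (by decide)] at *
  rw [hd ![diff, zero, diff, diff, zero] (by decide)] at *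
  rw [hd ![diff, zero, diff, zero, diff] (by decide)] at *
  rw [hd ![diff, zero, zero, diff, diff] (by decide)] at *
  rw [hd ![zero, diff, diff, diff, zero] (by decide)] at *
  rw [hd ![zero, diff, diff, zero, diff] (by decide)] at *
  rw [hd ![zero, diff, zero, diff, diff] (by decide)] at *
  rw [hd ![zero, zero, diff, diff, diff] (by decide)] at *
  rw [hd ![zero, diff, diff, diff, diff] (by decide)] at *
  rw [hd ![diff, zero, diff, diff, diff] (by decide)] at *
  rw [hd ![diff, diff, zero, diff, diff] (by decide)] at *
  rw [hd ![diff, diff, diff, zero, diff] (by decide)] at *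
  rw [hd ![diff, diff, diff, diff, zero] (by decide)] at *
  refine ⟨?_, ?_, ?_⟩ <;> linarith

end Relations

theorem exists_perm_apply_zero_one {i j : Fin 5} (h : i ≠ j) :
    ∃ σ : Equiv.Perm (Fin 5), σ 0 = i ∧ σ 1 = j := by
  refine ⟨Equiv.swap (Equiv.swap 0 i 1) j * Equiv.swap 0 i, ?_, ?_⟩
  · rw [Equiv.Perm.mul_apply, Equiv.swap_apply_left, Equiv.swap_apply_of_ne_of_ne _ h]
    intro hi
    have : Equiv.swap 0 i 0 = Equiv.swap 0 i 1 := by rw [Equiv.swap_apply_left, ← hi]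
    exact absurd ((Equiv.swap 0 i).injective this) (by decide)
  · rw [Equiv.Perm.mul_apply, Equiv.swap_apply_left]

theorem VanishesOnGrid.rename {t : ℝ} {u : MvPolynomial (Fin 5) ℝ} (hu : VanishesOnGrid t u)
    (σ : Equiv.Perm (Fin 5)) : VanishesOnGrid t (MvPolynomial.rename σ u) := by
  intro z B hB hz
  rw [eval_rename]
  refine hu _ (B.map σ.symm.toEmbedding) (by rwa [Finset.card_map]) fun k => ?_
  simp [hz, Finset.mem_map_equiv]

/-- The sum of the squares of the values of `p` at the points `± t eᵢ`. -/
noncomputable def sqSumAxis (t : ℝ) (i : Fin 5) (p : MvPolynomial (Fin 5) ℝ) : ℝ :=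
  eval (Pi.single i t) p ^ 2 + eval (Pi.single i (-t)) p ^ 2

/-- The sum of the squares of the values of `p` at the points `± t eᵢ ± t eⱼ`. -/
noncomputable def sqSumPair (t : ℝ) (i j : Fin 5) (p : MvPolynomial (Fin 5) ℝ) : ℝ :=
  eval (Pi.single i t + Pi.single j t) p ^ 2 + eval (Pi.single i t + Pi.single j (-t)) p ^ 2 +
    (eval (Pi.single i (-t) + Pi.single j t) p ^ 2 +
      eval (Pi.single i (-t) + Pi.single j (-t)) p ^ 2)

section Relations

open GridFunctional

variable {t : ℝ} {u : MvPolynomial (Fin 5) ℝ}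

theorem VanishesOnGrid.sqSumPair_zero_one (hu : VanishesOnGrid t u) (hdeg : u.totalDegree ≤ 5) :
    9 * sqSumPair t 0 1 u = 2 * (sqSumAxis t 0 u + sqSumAxis t 1 u) := by
  have hpair : ∀ x y : Bool,
      eval (Pi.single 0 (point t even x) + Pi.single 1 (point t even y)) u =
        gridApply t u ![even, even, zero, zero, zero] +
        2 * odd.weight x * gridApply t u ![odd, even, zero, zero, zero] +
        2 * odd.weight y * gridApply t u ![even, odd, zero, zero, zero] +
        4 * odd.weight x * odd.weight y * gridApply t u ![odd, odd, zero, zero, zero] := by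
    intro x y
    simp only [gridApply, Finset.mul_sum, ← Finset.sum_add_distrib, eval_eq']
    refine Finset.sum_congr rfl fun m _ => ?_
    cases x <;> cases y <;> simp [Fin.prod_univ_five, onPow, point, weight] <;> ring
  have hzero : ∀ x : Bool, eval (Pi.single 0 (point t even x)) u =
      gridApply t u ![even, zero, zero, zero, zero] +
        2 * odd.weight x * gridApply t u ![odd, zero, zero, zero, zero] := by
    intro x
    simp only [gridApply, Finset.mul_sum, ← Finset.sum_add_distrib, eval_eq']
    refine Finset.sum_congr rfl fun m _ => ?_
    cases x <;> simp [Fin.prod_univ_five, onPow, point, weight] <;> ring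
  have hone : ∀ x : Bool, eval (Pi.single 1 (point t even x)) u =
      gridApply t u ![zero, even, zero, zero, zero] +
        2 * odd.weight x * gridApply t u ![zero, odd, zero, zero, zero] := by
    intro x
    simp only [gridApply, Finset.mul_sum, ← Finset.sum_add_distrib, eval_eq']
    refine Finset.sum_congr rfl fun m _ => ?_
    cases x <;> simp [Fin.prod_univ_five, onPow, point, weight] <;> ring
  obtain ⟨h0, h1, h01⟩ := hu.gridApply_even hdeg
  simp only [h0, h1, h01, hu.gridApply_odd_odd hdeg, ← hu.gridApply_odd hdeg,
    ← hu.gridApply_odd' hdeg, Bool.forall_bool, point, weight] at hpair hzero hone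
  obtain ⟨⟨p1, p2⟩, p3, p4⟩ := hpair
  simp only [sqSumPair, sqSumAxis, p1, p2, p3, p4, hzero, hone]
  ring

theorem VanishesOnGrid.sqSumPair_eq (hu : VanishesOnGrid t u) (hdeg : u.totalDegree ≤ 5)
    {i j : Fin 5} (hij : i ≠ j) :
    9 * sqSumPair t i j u = 2 * (sqSumAxis t i u + sqSumAxis t j u) := by
  obtain ⟨σ, rfl, rfl⟩ := exists_perm_apply_zero_one hij
  have h := (hu.rename σ.symm).sqSumPair_zero_one ((totalDegree_rename_le _ _).trans hdeg)
  have hs : ∀ (k : Fin 5) (x : ℝ),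
      (Pi.single k x : Fin 5 → ℝ) ∘ σ.symm = Pi.single (σ k) x := by
    intro k x
    ext l
    simp [Pi.single_apply, Equiv.symm_apply_eq]
  have hadd : ∀ x y : Fin 5 → ℝ, (x + y) ∘ σ.symm = x ∘ σ.symm + y ∘ σ.symm := fun _ _ => rfl
  simpa only [sqSumPair, sqSumAxis, eval_rename, hadd, hs] using h

end Relations

/-- The even symmetric sextic `12·M₆ − 7·M₂·M₄ + M₂³` in five variables. -/
noncomputable def evenSextic : MvPolynomial (Fin 5) ℝ :=
  12 * powerSum 5 6 - 7 * powerSum 5 2 * powerSum 5 4 + (powerSum 5 2) ^ 3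

theorem eval_evenSextic {t : ℝ} {z : Fin 5 → ℝ} {B : Finset (Fin 5)}
    (hz : ∀ k, z k ^ 2 = if k ∈ B then t ^ 2 else 0) :
    eval z evenSextic = t ^ 6 * (B.card * (B.card - 3) * (B.card - 4)) := by
  have hpow : ∀ r, r ≠ 0 → ∑ k, z k ^ (2 * r) = B.card * t ^ (2 * r) := by
    intro r hr
    simp [pow_mul, hz, ite_pow, hr]
  have h2 := hpow 1 one_ne_zero
  have h4 := hpow 2 two_ne_zero
  have h6 := hpow 3 three_ne_zero
  norm_num at h2 h4 h6
  simp [evenSextic, powerSum, h2, h4, h6]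
  ring

theorem totalDegree_evenSextic_le : evenSextic.totalDegree ≤ 6 := by
  have hpow : ∀ r, (powerSum 5 r).totalDegree ≤ r := fun r =>
    totalDegree_finsetSum_le fun i _ => (totalDegree_X_pow i r).le
  have hC : ∀ a : ℝ, (C a : MvPolynomial (Fin 5) ℝ).totalDegree = 0 := fun a => totalDegree_C a
  have h12 : (12 : MvPolynomial (Fin 5) ℝ) = C 12 := (map_ofNat C 12).symm
  have h7 : (7 : MvPolynomial (Fin 5) ℝ) = C 7 := (map_ofNat C 7).symm
  have h1 := totalDegree_mul (C 12) (powerSum 5 6)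
  have h2 := totalDegree_mul (C 7 * powerSum 5 2) (powerSum 5 4)
  have h3 := totalDegree_mul (C 7) (powerSum 5 2)
  have h4 := totalDegree_pow (powerSum 5 2) 3
  have := hpow 2
  have := hpow 4
  have := hpow 6
  rw [hC] at h1 h3
  rw [evenSextic, h12, h7]
  refine (totalDegree_add _ _).trans (max_le ((totalDegree_sub _ _).trans (max_le ?_ ?_)) ?_) <;>
    omega

section SumOfSquares

variable {ι κ : Type*} [Fintype ι] [Fintype κ] {u : ι → MvPolynomial (Fin 5) ℝ}
  {v : κ → MvPolynomial (Fin 5) ℝ}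

theorem eval_evenSextic_mul_sum_sq (h : evenSextic * ∑ j, v j ^ 2 = ∑ i, u i ^ 2)
    {t : ℝ} {z : Fin 5 → ℝ} {B : Finset (Fin 5)}
    (hz : ∀ k, z k ^ 2 = if k ∈ B then t ^ 2 else 0) :
    t ^ 6 * (B.card * (B.card - 3) * (B.card - 4)) * ∑ j, eval z (v j) ^ 2 =
      ∑ i, eval z (u i) ^ 2 := by
  have := congrArg (eval z) h
  simpa only [map_mul, map_sum, map_pow, eval_evenSextic hz] using this

theorem vanishesOnGrid_of_mul_sum_sq (h : evenSextic * ∑ j, v j ^ 2 = ∑ i, u i ^ 2)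
    (t : ℝ) (i : ι) : VanishesOnGrid t (u i) := by
  intro z B hB hz
  have hsum := eval_evenSextic_mul_sum_sq h hz
  have hcard : (B.card : ℝ) * (B.card - 3) * (B.card - 4) = 0 := by
    rcases hB with hB | hB | hB <;> simp [hB]
  rw [hcard, mul_zero, zero_mul, eq_comm,
    Finset.sum_eq_zero_iff_of_nonneg fun _ _ => sq_nonneg _] at hsum
  exact pow_eq_zero_iff two_ne_zero |>.mp (hsum i (Finset.mem_univ i))

theorem sum_sqSumPair_eq (hv : ∀ j, (v j).totalDegree ≤ 2)
    (h : evenSextic * ∑ j, v j ^ 2 = ∑ i, u i ^ 2) {t : ℝ} (ht : t ≠ 0) {i j : Fin 5}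
    (hij : i ≠ j) :
    3 * ∑ k, sqSumPair t i j (v k) = ∑ k, sqSumAxis t i (v k) + ∑ k, sqSumAxis t j (v k) := by
  have hsq : (∑ j, v j ^ 2).totalDegree ≤ 4 := totalDegree_finsetSum_le fun j _ =>
    (totalDegree_pow _ _).trans (by have := hv j; omega)
  have hdeg : ∀ k, (u k).totalDegree ≤ 5 := totalDegree_le_of_sum_sq <| by
    rw [← h]
    exact (totalDegree_mul _ _).trans (by have := totalDegree_evenSextic_le; omega)
  have haxis : ∀ i, ∑ k, sqSumAxis t i (u k) = 6 * t ^ 6 * ∑ k, sqSumAxis t i (v k) := by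
    intro i
    have hz : ∀ x : ℝ, x ^ 2 = t ^ 2 → ∀ k, (Pi.single i x : Fin 5 → ℝ) k ^ 2 =
        if k ∈ ({i} : Finset (Fin 5)) then t ^ 2 else 0 := by
      intro x hx k
      by_cases hk : k = i <;> simp [hk, hx]
    have h1 := eval_evenSextic_mul_sum_sq h (hz t rfl)
    have h2 := eval_evenSextic_mul_sum_sq h (hz (-t) (neg_sq t))
    simp only [sqSumAxis, Finset.sum_add_distrib, ← h1, ← h2, Finset.card_singleton]
    push_cast
    ring
  have hpair : ∑ k, sqSumPair t i j (u k) = 4 * t ^ 6 * ∑ k, sqSumPair t i j (v k) := by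
    have hz : ∀ x y : ℝ, x ^ 2 = t ^ 2 → y ^ 2 = t ^ 2 → ∀ k,
        (Pi.single i x + Pi.single j y : Fin 5 → ℝ) k ^ 2 =
          if k ∈ ({i, j} : Finset (Fin 5)) then t ^ 2 else 0 := by
      intro x y hx hy k
      by_cases hk : k = i
      · subst hk
        simp [hx, hij]
      · by_cases hk' : k = j
        · subst hk'
          simp [hy, hk]
        · simp [hk, hk']
    have h1 := eval_evenSextic_mul_sum_sq h (hz t t rfl rfl)
    have h2 := eval_evenSextic_mul_sum_sq h (hz t (-t) rfl (neg_sq t))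
    have h3 := eval_evenSextic_mul_sum_sq h (hz (-t) t (neg_sq t) rfl)
    have h4 := eval_evenSextic_mul_sum_sq h (hz (-t) (-t) (neg_sq t) (neg_sq t))
    simp only [sqSumPair, Finset.sum_add_distrib, ← h1, ← h2, ← h3, ← h4, Finset.card_pair hij]
    push_cast
    ring
  have hu : 9 * ∑ k, sqSumPair t i j (u k) =
      2 * (∑ k, sqSumAxis t i (u k) + ∑ k, sqSumAxis t j (u k)) := by
    rw [← Finset.sum_add_distrib, Finset.mul_sum, Finset.mul_sum]
    exact Finset.sum_congr rfl fun k _ =>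
      (vanishesOnGrid_of_mul_sum_sq h t k).sqSumPair_eq (hdeg k) hij
  rw [hpair, haxis, haxis] at hu
  have ht6 : 12 * t ^ 6 ≠ 0 := by positivity
  exact mul_left_cancel₀ ht6 (by linarith)

theorem eq_zero_of_evenSextic_mul_sum_sq (hv : ∀ j, (v j).totalDegree ≤ 2)
    (h : evenSextic * ∑ j, v j ^ 2 = ∑ i, u i ^ 2) (l : κ) : v l = 0 := by
  choose α β q hq using fun j => exists_quadratic_of_totalDegree_le_two (hv j)
  have heval : ∀ k z, eval z (v k) =
      α k + ∑ i, β k i * z i + ∑ i, ∑ j, q k i j * (z i * z j) := by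
    intro k z
    conv_lhs => rw [hq k]
    simp
  have haxis : ∀ t i k, sqSumAxis t i (v k) =
      2 * (α k ^ 2 + t ^ 2 * (2 * α k * q k i i + β k i ^ 2) + t ^ 4 * q k i i ^ 2) := by
    intro t i k
    simp only [sqSumAxis, heval]
    simp [Pi.single_apply]
    ring
  have hpair : ∀ t i j k, i ≠ j → sqSumPair t i j (v k) =
      4 * (α k ^ 2 + t ^ 2 * (2 * α k * (q k i i + q k j j) + β k i ^ 2 + β k j ^ 2) +
        t ^ 4 * ((q k i i + q k j j) ^ 2 + (q k i j + q k j i) ^ 2)) := by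
    intro t i j k hij
    simp only [sqSumPair, heval]
    simp [Pi.single_apply, mul_add, add_mul, Finset.sum_add_distrib]
    ring
  have hcoeff : ∀ i j, i ≠ j → ∑ k, 8 * α k ^ 2 = 0 ∧
      ∑ k, (20 * α k * (q k i i + q k j j) + 10 * (β k i ^ 2 + β k j ^ 2)) = 0 ∧
      ∑ k, (12 * ((q k i i + q k j j) ^ 2 + (q k i j + q k j i) ^ 2) -
        2 * (q k i i ^ 2 + q k j j ^ 2)) = 0 := by
    intro i j hij
    have hpoly : ∀ t : ℝ, t ≠ 0 → ∑ k, 8 * α k ^ 2 +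
        t ^ 2 * ∑ k, (20 * α k * (q k i i + q k j j) + 10 * (β k i ^ 2 + β k j ^ 2)) +
        t ^ 4 * ∑ k, (12 * ((q k i i + q k j j) ^ 2 + (q k i j + q k j i) ^ 2) -
          2 * (q k i i ^ 2 + q k j j ^ 2)) = 0 := by
      intro t ht
      have ht' := sub_eq_zero.mpr (sum_sqSumPair_eq hv h ht hij)
      simp only [hpair t i j _ hij, haxis, Finset.mul_sum, ← Finset.sum_add_distrib,
        ← Finset.sum_sub_distrib] at ht' ⊢
      rw [← ht']
      exact Finset.sum_congr rfl fun k _ => by ring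
    have h1 := hpoly 1 (by norm_num)
    have h2 := hpoly 2 (by norm_num)
    have h3 := hpoly 3 (by norm_num)
    norm_num only at h1 h2 h3
    refine ⟨?_, ?_, ?_⟩ <;> linarith
  have hα : ∀ k, α k = 0 := by
    have h0 := (hcoeff 0 1 (by decide)).1
    rw [Finset.sum_eq_zero_iff_of_nonneg fun _ _ => by positivity] at h0
    intro k
    simpa using h0 k (Finset.mem_univ k)
  have hβ : ∀ i, β l i = 0 := by
    intro i
    obtain ⟨j, hij⟩ := exists_ne i
    have h1 := (hcoeff i j hij.symm).2.1
    simp only [hα, mul_zero, zero_mul, zero_add] at h1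
    rw [Finset.sum_eq_zero_iff_of_nonneg fun _ _ => by positivity] at h1
    have := h1 l (Finset.mem_univ l)
    nlinarith [sq_nonneg (β l i), sq_nonneg (β l j)]
  have hqq : ∀ i j, i ≠ j → q l i i = 0 ∧ q l i j + q l j i = 0 := by
    intro i j hij
    obtain ⟨m, hmi, hmj⟩ : ∃ m : Fin 5, i ≠ m ∧ j ≠ m := by
      revert i j
      decide
    have h1 := (hcoeff i j hij).2.2
    have h2 := (hcoeff i m hmi).2.2
    have h3 := (hcoeff j m hmj).2.2
    have hsum : ∑ k, (12 * (q k i i + q k j j + q k m m) ^ 2 +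
        8 * (q k i i ^ 2 + q k j j ^ 2 + q k m m ^ 2) + 12 * ((q k i j + q k j i) ^ 2 +
        (q k i m + q k m i) ^ 2 + (q k j m + q k m j) ^ 2)) = 0 := by
      rw [← add_zero (0 : ℝ), ← add_zero (0 + 0 : ℝ)]
      nth_rewrite 1 [← h1]
      nth_rewrite 1 [← h2]
      nth_rewrite 1 [← h3]
      rw [← Finset.sum_add_distrib, ← Finset.sum_add_distrib]
      exact Finset.sum_congr rfl fun k _ => by ring
    rw [Finset.sum_eq_zero_iff_of_nonneg fun _ _ => by positivity] at hsum
    have hl := hsum l (Finset.mem_univ l)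
    constructor <;> refine pow_eq_zero_iff two_ne_zero |>.mp (le_antisymm ?_ (sq_nonneg _)) <;>
      nlinarith [sq_nonneg (q l i i + q l j j + q l m m), sq_nonneg (q l i i), sq_nonneg (q l j j),
        sq_nonneg (q l m m), sq_nonneg (q l i j + q l j i), sq_nonneg (q l i m + q l m i),
        sq_nonneg (q l j m + q l m j)]
  have hskew : ∀ i j, q l i j + q l j i = 0 := by
    intro i j
    by_cases hij : i = j
    · obtain ⟨m, hm⟩ := exists_ne i
      rw [← hij, (hqq i m hm.symm).1, add_zero]
    · exact (hqq i j hij).2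
  refine MvPolynomial.funext fun z => ?_
  have hswap : ∑ i, ∑ j, q l i j * (z i * z j) = ∑ i, ∑ j, q l j i * (z j * z i) :=
    Finset.sum_comm
  have hdouble : ∑ i, ∑ j, q l i j * (z i * z j) + ∑ i, ∑ j, q l j i * (z j * z i) = 0 := by
    simp only [← Finset.sum_add_distrib]
    refine Finset.sum_eq_zero fun i _ => Finset.sum_eq_zero fun j _ => ?_
    linear_combination (z i * z j) * hskew i j
  simp only [heval, hα, hβ, zero_mul, Finset.sum_const_zero, map_zero]
  linarith

end SumOfSquares

/-- the even symmetric sextic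
`f_{5,3} = 12·M₆ − 7·M₂·M₄ + M₂³` in `ℝ[X₁,…,X₅]` admits no Hilbert–Artin
representation with denominator of degree ≤ 4: there are no polynomials
`u₁,…,u_l, v₁,…,v_{l'}` with `deg(vⱼ) ≤ 2` for all `j` and `Σⱼ vⱼ² ≠ 0` such
that `f_{5,3} · Σⱼ vⱼ² = Σᵢ uᵢ²`. -/
theorem statement17 :
    ¬ ∃ (l l' : ℕ) (u : Fin l → MvPolynomial (Fin 5) ℝ)
        (v : Fin l' → MvPolynomial (Fin 5) ℝ),
        (∀ j, (v j).totalDegree ≤ 2) ∧ (∑ j, v j ^ 2) ≠ 0 ∧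
        (12 * powerSum 5 6 - 7 * powerSum 5 2 * powerSum 5 4 + (powerSum 5 2) ^ 3) *
          (∑ j, v j ^ 2) = ∑ i, u i ^ 2 := by
  rintro ⟨l, l', u, v, hv, hne, h⟩
  refine hne (Finset.sum_eq_zero fun j _ => ?_)
  rw [eq_zero_of_evenSextic_mul_sum_sq hv h j, zero_pow two_ne_zero]
end

section
/- For every integer n ≥ 3, the even symmetric sextics f_{n,k} are nonnegative on all of ℝⁿ: for every k with 0 ≤ k ≤ n−1 and every point x ∈ ℝⁿ, f_{n,k}(x) ≥ 0, where f_{n,0} = −n·M_{n,6} + (n+1)·M_{n,2}·M_{n,4} − M_{n,2}³ and f_{n,k} = (k²+k)·M_{n,6} − (2k+1)·M_{n,2}·M_{n,4} + M_{n,2}³ for 1 ≤ k ≤ n−1. -/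
open MvPolynomial

/-- The even symmetric sextics:
`f_{n,0} = −n·M₆ + (n+1)·M₂·M₄ − M₂³` and, for `1 ≤ k ≤ n−1`,
`f_{n,k} = (k²+k)·M₆ − (2k+1)·M₂·M₄ + M₂³`. -/
noncomputable def evenSymSextic (n k : ℕ) : MvPolynomial (Fin n) ℝ :=
  if k = 0 then
    -(n : MvPolynomial (Fin n) ℝ) * powerSum n 6
      + ((n : MvPolynomial (Fin n) ℝ) + 1) * powerSum n 2 * powerSum n 4
      - (powerSum n 2) ^ 3
  else
    ((k ^ 2 + k : ℕ) : MvPolynomial (Fin n) ℝ) * powerSum n 6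
      - ((2 * k + 1 : ℕ) : MvPolynomial (Fin n) ℝ) * powerSum n 2 * powerSum n 4
      + (powerSum n 2) ^ 3

theorem Int.sub_mul_sub_sub_one_nonneg (m k : ℤ) : 0 ≤ (m - k) * (m - k - 1) := by
  rcases le_or_gt (m - k) 0 with h | h
  · exact mul_nonneg_of_nonpos_of_nonpos h (by linarith)
  · exact mul_nonneg h.le (by omega)

namespace Finset

variable {ι : Type*}

/-- A sum of squared differences weighted by an affine function of `yᵢ + yⱼ`, in terms of
power sums. -/
theorem sum_sum_sq_sub_mul_affine (s : Finset ι) (y : ι → ℝ) (α β : ℝ) :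
    ∑ i ∈ s, ∑ j ∈ s, (y i - y j) ^ 2 * (α * (y i + y j) + β) =
      2 * α * (s.card * ∑ i ∈ s, y i ^ 3 - (∑ i ∈ s, y i) * ∑ i ∈ s, y i ^ 2) +
        2 * β * (s.card * ∑ i ∈ s, y i ^ 2 - (∑ i ∈ s, y i) ^ 2) := by
  have expand : ∀ i j, (y i - y j) ^ 2 * (α * (y i + y j) + β) =
      (α * y i ^ 3 + β * y i ^ 2) + (α * y j ^ 3 + β * y j ^ 2)
        - α * (y i ^ 2 * y j) - α * (y i * y j ^ 2) - 2 * β * (y i * y j) :=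
    fun i j => by ring
  simp only [expand, sum_add_distrib, sum_sub_distrib, ← mul_sum, ← sum_mul, sum_const,
    nsmul_eq_mul]
  ring

theorem card_mul_cubic_nonneg (s : Finset ι) (y : ι → ℝ) (hy : ∀ i ∈ s, 0 ≤ y i) :
    0 ≤ -(s.card : ℝ) * ∑ i ∈ s, y i ^ 3
      + (s.card + 1) * (∑ i ∈ s, y i) * ∑ i ∈ s, y i ^ 2 - (∑ i ∈ s, y i) ^ 3 := by
  classical
  have identity := sum_sum_sq_sub_mul_affine s y (-1) (∑ i ∈ s, y i)
  have nonneg : 0 ≤ ∑ i ∈ s, ∑ j ∈ s,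
      (y i - y j) ^ 2 * (-1 * (y i + y j) + ∑ i ∈ s, y i) := by
    refine sum_nonneg fun i hi => sum_nonneg fun j hj => ?_
    rcases eq_or_ne i j with rfl | hij
    · simp
    · have pair_le : ∑ l ∈ {i, j}, y l ≤ ∑ l ∈ s, y l :=
        sum_le_sum_of_subset_of_nonneg (by simp [insert_subset_iff, hi, hj])
          fun l hl _ => hy l hl
      rw [sum_pair hij] at pair_le
      exact mul_nonneg (sq_nonneg _) (by linarith)
  linarith

/-- Replacing two entries by their sum and zero. -/
theorem sum_erase_update_add_pow [DecidableEq ι] (s : Finset ι) (y : ι → ℝ) {a b : ι}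
    (ha : a ∈ s) (hb : b ∈ s) (hab : a ≠ b) (r : ℕ) :
    ∑ i ∈ s.erase b, Function.update y a (y a + y b) i ^ r =
      ∑ i ∈ s, y i ^ r - y a ^ r - y b ^ r + (y a + y b) ^ r := by
  have ha' : a ∈ s.erase b := mem_erase.2 ⟨hab, ha⟩
  rw [← add_sum_erase s (fun i => y i ^ r) hb, ← add_sum_erase _ (fun i => y i ^ r) ha',
    ← add_sum_erase _ _ ha', Function.update_self]
  have rest : ∑ i ∈ (s.erase b).erase a, Function.update y a (y a + y b) i ^ r =
      ∑ i ∈ (s.erase b).erase a, y i ^ r :=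
    sum_congr rfl fun i hi => by rw [Function.update_of_ne (ne_of_mem_erase hi)]
  rw [rest]
  ring

/-- If every pair of distinct entries has a large sum, then so does the average pair. -/
theorem card_mul_le_of_pair_sum_le [DecidableEq ι] (s : Finset ι) (y : ι → ℝ) (c d : ℝ)
    (hs : 1 < s.card) (hpos : 0 < ∑ i ∈ s, y i)
    (hpair : ∀ i ∈ s, ∀ j ∈ s, i ≠ j → 2 * d * ∑ l ∈ s, y l ≤ c * (y i + y j)) :
    d * s.card ≤ c := by
  have sum_le : ∑ i ∈ s, ∑ j ∈ s.erase i, 2 * d * ∑ l ∈ s, y l ≤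
      ∑ i ∈ s, ∑ j ∈ s.erase i, c * (y i + y j) :=
    sum_le_sum fun i hi => sum_le_sum fun j hj =>
      hpair i hi j (mem_of_mem_erase hj) (ne_of_mem_erase hj).symm
  have inner_const : ∀ i ∈ s, ∑ j ∈ s.erase i, 2 * d * ∑ l ∈ s, y l =
      ((s.card : ℝ) - 1) * (2 * d * ∑ l ∈ s, y l) := fun i hi => by
    rw [sum_const, nsmul_eq_mul, card_erase_of_mem hi, Nat.cast_pred (by omega)]
  have inner_pair : ∀ i ∈ s, ∑ j ∈ s.erase i, c * (y i + y j) =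
      c * (((s.card : ℝ) - 2) * y i + ∑ l ∈ s, y l) := fun i hi => by
    rw [← mul_sum, sum_add_distrib, sum_const, nsmul_eq_mul, card_erase_of_mem hi,
      Nat.cast_pred (by omega), ← add_sum_erase s y hi]
    ring
  rw [sum_congr rfl inner_const, sum_congr rfl inner_pair, sum_const, ← mul_sum,
    sum_add_distrib, ← mul_sum, sum_const, nsmul_eq_mul, nsmul_eq_mul] at sum_le
  have card_gt : (1 : ℝ) < s.card := by exact_mod_cast hs
  have factor_pos : 0 < 2 * ((s.card : ℝ) - 1) * ∑ l ∈ s, y l :=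
    mul_pos (by linarith) hpos
  refine le_of_mul_le_mul_right ?_ factor_pos
  linarith

theorem cubic_nonneg_of_pair_sum_le [DecidableEq ι] (k : ℕ) (s : Finset ι) (y : ι → ℝ)
    (hy : ∀ i ∈ s, 0 ≤ y i)
    (hpair : ∀ i ∈ s, ∀ j ∈ s, i ≠ j →
      2 * (2 * k + 1) * ∑ l ∈ s, y l ≤ 3 * ((k : ℝ) ^ 2 + k) * (y i + y j)) :
    0 ≤ ((k : ℝ) ^ 2 + k) * ∑ i ∈ s, y i ^ 3
      - (2 * k + 1) * (∑ i ∈ s, y i) * ∑ i ∈ s, y i ^ 2 + (∑ i ∈ s, y i) ^ 3 := by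
  set K : ℝ := (k : ℝ) ^ 2 + k with hK
  have K_nonneg : 0 ≤ K := by positivity
  rcases (sum_nonneg hy).eq_or_lt with hzero | hpos
  · rw [← hzero]
    have : 0 ≤ K * ∑ i ∈ s, y i ^ 3 :=
      mul_nonneg K_nonneg (sum_nonneg fun i hi => pow_nonneg (hy i hi) 3)
    linarith
  have card_pos : (0 : ℝ) < s.card := by
    rw [Nat.cast_pos, card_pos]
    exact nonempty_of_sum_ne_zero hpos.ne'
  have nonneg : 0 ≤ ∑ i ∈ s, ∑ j ∈ s, (y i - y j) ^ 2 *
      (s.card * K * (y i + y j) + (K - (2 * k + 1) * s.card) * ∑ l ∈ s, y l) := by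
    refine sum_nonneg fun i hi => sum_nonneg fun j hj => ?_
    rcases eq_or_ne i j with rfl | hij
    · simp
    · refine mul_nonneg (sq_nonneg _) ?_
      have card_le := card_mul_le_of_pair_sum_le s y _ _
        (one_lt_card.2 ⟨i, hi, j, hj, hij⟩) hpos hpair
      have pair_le := mul_le_mul_of_nonneg_left (hpair i hi j hj hij) card_pos.le
      have sum_le := mul_le_mul_of_nonneg_right card_le hpos.le
      linarith
  rw [sum_sum_sq_sub_mul_affine] at nonneg
  have integer_gap : (0 : ℝ) ≤ ((s.card : ℝ) - k) * (s.card - k - 1) := by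
    exact_mod_cast Int.sub_mul_sub_sub_one_nonneg s.card k
  have gap_cube := mul_nonneg integer_gap (pow_nonneg hpos.le 3)
  refine nonneg_of_mul_nonneg_right (a := (s.card : ℝ) ^ 2) ?_ (by positivity)
  rw [hK] at nonneg ⊢
  linarith

theorem cubic_nonneg (k : ℕ) (s : Finset ι) (y : ι → ℝ) (hy : ∀ i ∈ s, 0 ≤ y i) :
    0 ≤ ((k : ℝ) ^ 2 + k) * ∑ i ∈ s, y i ^ 3
      - (2 * k + 1) * (∑ i ∈ s, y i) * ∑ i ∈ s, y i ^ 2 + (∑ i ∈ s, y i) ^ 3 := by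
  classical
  induction hm : s.card generalizing s y with
  | zero => simp [card_eq_zero.1 hm]
  | succ m ih =>
    by_cases hpair : ∀ i ∈ s, ∀ j ∈ s, i ≠ j →
        2 * (2 * k + 1) * ∑ l ∈ s, y l ≤ 3 * ((k : ℝ) ^ 2 + k) * (y i + y j)
    · exact cubic_nonneg_of_pair_sum_le k s y hy hpair
    push Not at hpair
    obtain ⟨a, ha, b, hb, hab, hlt⟩ := hpair
    have merged := ih (s.erase b) (Function.update y a (y a + y b)) (fun i hi => by
      rcases eq_or_ne i a with rfl | hia
      · rw [Function.update_self]
        exact add_nonneg (hy _ ha) (hy _ hb)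
      · rw [Function.update_of_ne hia]
        exact hy i (mem_of_mem_erase hi)) (by rw [card_erase_of_mem hb, hm]; rfl)
    have sum_merged := sum_erase_update_add_pow s y ha hb hab 1
    simp only [pow_one] at sum_merged
    rw [sum_erase_update_add_pow s y ha hb hab, sum_erase_update_add_pow s y ha hb hab,
      sum_merged, show ∑ i ∈ s, y i - y a - y b + (y a + y b) = ∑ i ∈ s, y i by ring] at merged
    have gain := mul_le_mul_of_nonneg_left hlt.le (mul_nonneg (hy a ha) (hy b hb))
    linarith

end Finset

theorem eval_powerSum_two_mul (n r : ℕ) (x : Fin n → ℝ) :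
    eval x (powerSum n (2 * r)) = ∑ i, (x i ^ 2) ^ r := by
  simp [powerSum, pow_mul]

/-- for every `n ≥ 3` and every `0 ≤ k ≤ n−1`, the even symmetric
sextic `f_{n,k}` is nonnegative on all of `ℝⁿ`. -/
theorem statement18 (n k : ℕ) (hn : 3 ≤ n) (hk : k ≤ n - 1) :
    ∀ x : Fin n → ℝ, 0 ≤ eval x (evenSymSextic n k) := by
  intro x
  have square_nonneg : ∀ i ∈ Finset.univ, 0 ≤ x i ^ 2 := fun i _ => sq_nonneg (x i)
  have eval_two := eval_powerSum_two_mul n 1 x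
  have eval_four := eval_powerSum_two_mul n 2 x
  have eval_six := eval_powerSum_two_mul n 3 x
  norm_num only [pow_one] at eval_two eval_four eval_six
  unfold evenSymSextic
  split_ifs
  · have bound := Finset.card_mul_cubic_nonneg Finset.univ (fun i => x i ^ 2) square_nonneg
    simp only [Finset.card_univ, Fintype.card_fin] at bound
    simpa only [map_add, map_sub, map_mul, map_neg, map_pow, map_natCast, map_one, eval_two,
      eval_four, eval_six, ← pow_mul, Nat.reduceMul] using bound
  · have bound := Finset.cubic_nonneg k Finset.univ (fun i => x i ^ 2) square_nonneg
    simpa only [map_add, map_sub, map_mul, map_pow, map_natCast, map_ofNat, map_one, eval_two,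
      eval_four, eval_six, Nat.cast_add, Nat.cast_mul, Nat.cast_pow, Nat.cast_ofNat, Nat.cast_one,
      ← pow_mul, Nat.reduceMul] using bound
end
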